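/- First Growth Theorem: For every β₁ ∈ (0,1) there exists μ ∈ (0,1), depending only on n, ν, S and β₁, with the following property. Let Y = (y,s) ∈ ℝ^{n+1}, r > 0, and let u ∈ C^{2,1} on the closure of Q_r(Y) satisfy −u_t + Lu ≥ 0 at every point of Q_r(Y). If the (n+1)-dimensional Lebesgue measure of {X ∈ Q_r(Y) : u(X) > 0} is at most μ·|Q_r(Y)|, then M_{r/2}(Y) ≤ β₁ · M_r(Y), where M_ρ(Y) := max over the closure of Q_ρ(Y) of u₊ and u₊ := max(u,0). -/

import Mathlib

open MeasureTheory ENNReal Metric Set RealInnerProductSpace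

noncomputable section

/-- `n`-dimensional Euclidean space. -/
abbrev En (n : ℕ) : Type := EuclideanSpace ℝ (Fin n)

variable {n : ℕ}

/-- Time derivative `u_t`. -/
def Dt (u : En n × ℝ → ℝ) (X : En n × ℝ) : ℝ :=
  deriv (fun t => u (X.1, t)) X.2

/-- First spatial derivative `D_i u`. -/
def Dx (u : En n × ℝ → ℝ) (i : Fin n) (X : En n × ℝ) : ℝ :=
  fderiv ℝ (fun x => u (x, X.2)) X.1 (EuclideanSpace.single i 1)

/-- Second spatial derivative `D_{ij} u`. -/
def Dxx (u : En n × ℝ → ℝ) (i j : Fin n) (X : En n × ℝ) : ℝ :=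
  Dx (Dx u j) i X

/-- `u` is of class `C^{2,1}` on `Q`: `u`, `D_i u`, `D_{ij} u`, `u_t` exist and are
continuous on `Q`. -/
structure IsC21 (u : En n × ℝ → ℝ) (Q : Set (En n × ℝ)) : Prop where
  cont : ContinuousOn u Q
  diff_t : ∀ X ∈ Q, DifferentiableAt ℝ (fun t => u (X.1, t)) X.2
  diff_x : ∀ X ∈ Q, DifferentiableAt ℝ (fun x => u (x, X.2)) X.1
  diff_xx : ∀ j : Fin n, ∀ X ∈ Q, DifferentiableAt ℝ (fun x => Dx u j (x, X.2)) X.1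
  cont_t : ContinuousOn (Dt u) Q
  cont_x : ∀ i, ContinuousOn (Dx u i) Q
  cont_xx : ∀ i j, ContinuousOn (Dxx u i j) Q

/-- Uniform parabolicity with constant `ν` on `Q`:
`ν⁻¹|ξ|² ≤ Σ a_ij ξ_i ξ_j` and `Σ a_ij² ≤ ν²`. -/
def UnifParabolic (ν : ℝ) (a : En n × ℝ → Matrix (Fin n) (Fin n) ℝ)
    (Q : Set (En n × ℝ)) : Prop :=
  ∀ X ∈ Q, (∀ ξ : Fin n → ℝ, ν⁻¹ * (∑ i, ξ i ^ 2) ≤ ∑ i, ∑ j, a X i j * ξ i * ξ j) ∧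
    (∑ i, ∑ j, (a X i j) ^ 2) ≤ ν ^ 2

/-- `Lu = Σ_{ij} a_ij D_ij u + Σ_i b_i D_i u`. -/
def Lop (a : En n × ℝ → Matrix (Fin n) (Fin n) ℝ) (b : En n × ℝ → En n)
    (u : En n × ℝ → ℝ) (X : En n × ℝ) : ℝ :=
  (∑ i, ∑ j, a X i j * Dxx u i j X) + ∑ i, b X i * Dx u i X

/-- `∫ (ess sup_t |f(x,t)|)ⁿ dx`, the `n`-th power of the `L^n_x L^∞_t` norm of `f`
over the set `Q ⊆ ℝⁿ × ℝ`. -/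
def LxnLtinfPow {E : Type*} [NNNorm E] (f : En n × ℝ → E) (Q : Set (En n × ℝ)) : ℝ≥0∞ :=
  ∫⁻ x, (essSup (fun t => (‖f (x, t)‖₊ : ℝ≥0∞)) (volume.restrict {t | (x, t) ∈ Q})) ^ n

/-- The `L^n_x L^∞_t` norm of `f` over `Q`. -/
def LxnLtinf {E : Type*} [NNNorm E] (f : En n × ℝ → E) (Q : Set (En n × ℝ)) : ℝ≥0∞ :=
  (LxnLtinfPow f Q) ^ (1 / (n : ℝ))

/-- The box `B_ρ(y) × (t₁, t₂)`. -/
def box (y : En n) (ρ t₁ t₂ : ℝ) : Set (En n × ℝ) := ball y ρ ×ˢ Ioo t₁ t₂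

/-- The standard parabolic cylinder `Q_r(Y) = B_r(y) × (s - r², s)`. -/
def pcyl (Y : En n × ℝ) (r : ℝ) : Set (En n × ℝ) := box Y.1 r (Y.2 - r ^ 2) Y.2

/-- The slanted cylinder `V_r(Y) = {(x,t) : |x - (t/s)y| < r, 0 < t < s}`. -/
def slantCyl (Y : En n × ℝ) (r : ℝ) : Set (En n × ℝ) :=
  {X | ‖X.1 - (X.2 / Y.2) • Y.1‖ < r ∧ 0 < X.2 ∧ X.2 < Y.2}

/-- Supremum of the positive part `u₊` over a set `A`. -/
def supPos (u : En n × ℝ → ℝ) (A : Set (En n × ℝ)) : ℝ :=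
  sSup ((fun X => max (u X) 0) '' A)

/-- `Ω` is a Lipschitz domain with character `(rΩ, mΩ)`: at every boundary point `y`
there is a coordinate frame, encoded by the unit "vertical" direction `e`, in which
`Ω ∩ B_{rΩ}(y)` is the region above the graph of an `mΩ`-Lipschitz function `φ`
of the tangential variables. -/
def IsLipschitzDomain (Ω : Set (En n)) (rΩ mΩ : ℝ) : Prop :=
  0 < rΩ ∧ 0 ≤ mΩ ∧
  ∀ y ∈ frontier Ω, ∃ (e : En n) (φ : En n → ℝ),
    ‖e‖ = 1 ∧ LipschitzWith (Real.toNNReal mΩ) φ ∧ φ 0 = 0 ∧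
    (∀ x, x ∈ Ω ∩ ball y rΩ ↔
      dist x y < rΩ ∧ φ ((x - y) - ⟪x - y, e⟫ • e) < ⟪x - y, e⟫) ∧
    (∀ ρ : ℝ, 0 < ρ → ρ ≤ rΩ → y + ρ • e ∈ Ω)

/-!
The estimate is of Aleksandrov-Bakelman-Pucci type. Let `v = u - φ` with `φ` a barrier above `u` on
the parabolic boundary. For a slope `p` with `‖p‖ ≤ m / (4ρ)`, the running maximum in time of
`v (z, t) - ⟪p, z - y⟫`, truncated below at `‖p‖ ρ`, rises by at least `m / 2` if `v` reaches `m`,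
and it rises only at contact points of slope `p`, at the rate `v_t`. The change of variables
`p = ∇v`, with weight `(‖p‖ + k)⁻ⁿ`, bounds `m / 2 * ∫ (‖p‖ + k)⁻ⁿ dp` by the integral over
the contact set of `|det D²v| v_t (‖∇v‖ + k)⁻ⁿ`. There the differential inequality gives the bound
`C N (N / k)ⁿ + C |b|ⁿ v_t`. The first term contributes a multiple of `|{u > 0}|`. The second
contributes at most `C (sup v) ∫ (ess supₜ |b|)ⁿ`, because `v` increases along the contact times
over each point `x`.

Since `S` need not be small, this is applied twice. By pigeonhole some sphere of radius
`R ∈ [r/2, r]` has little drift mass in all small balls centred on it, and there a quadratic barrier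
yields `u ≤ θ M`. Inside that sphere a barrier depending on time only suffices; it does not meet the
drift, so `k` may be taken exponentially small, and the logarithmic divergence of `∫ (‖p‖ + k)⁻ⁿ dp`
outweighs `S`.
-/

open Filter Topology Module

section SecondOrder

lemma deriv_deriv_nonpos_of_isLocalMax {f : ℝ → ℝ} {x : ℝ} (h : IsLocalMax f x)
    (hf : ContinuousAt f x) : deriv (deriv f) x ≤ 0 := by
  by_contra! hpos
  have hmin : IsLocalMin f x := isLocalMin_of_deriv_deriv_pos hpos h.deriv_eq_zero hf
  have hconst : f =ᶠ[𝓝 x] fun _ => f x := by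
    filter_upwards [h, hmin] with z hle hge using le_antisymm hle hge
  have hderiv : deriv f =ᶠ[𝓝 x] fun _ => 0 := by simpa using hconst.deriv
  simp [hderiv.deriv_eq] at hpos

variable {E : Type*} [NormedAddCommGroup E] [InnerProductSpace ℝ E] [CompleteSpace E]

lemma gradient_eq_zero_of_isLocalMax {f : E → ℝ} {g x : E} (hf : HasGradientAt f g x)
    (h : IsLocalMax f x) : g = 0 := by
  simpa using h.hasFDerivAt_eq_zero hf.hasFDerivAt

lemma inner_hessian_nonpos_of_isLocalMax {f : E → ℝ} {g : E → E} {H : E →L[ℝ] E} {x : E}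
    (hf : ∀ᶠ z in 𝓝 x, HasGradientAt f (g z) z) (hg : HasFDerivAt g H x)
    (h : IsLocalMax f x) (ξ : E) : ⟪H ξ, ξ⟫ ≤ 0 := by
  set line : ℝ → E := fun τ => x + τ • ξ
  have hline0 : line 0 = x := by simp [line]
  have hline : ∀ τ, HasDerivAt line ξ τ := fun τ => by
    simpa [line] using (hasDerivAt_id τ).smul_const ξ
  have htendsto : Tendsto line (𝓝 0) (𝓝 x) := hline0 ▸ (hline 0).continuousAt
  have hderiv : ∀ᶠ τ in 𝓝 0, HasDerivAt (f ∘ line) ⟪g (line τ), ξ⟫ τ := by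
    filter_upwards [htendsto.eventually hf] with τ hτ
    simpa using hτ.hasFDerivAt.comp_hasDerivAt τ (hline τ)
  have hsecond : HasDerivAt (fun τ => ⟪g (line τ), ξ⟫) ⟪H ξ, ξ⟫ 0 := by
    have hcomp := (hline0.symm ▸ hg : HasFDerivAt g H (line 0)).comp_hasDerivAt 0 (hline 0)
    simpa using hcomp.inner ℝ (hasDerivAt_const 0 ξ)
  have hmax : IsLocalMax (f ∘ line) 0 := by
    filter_upwards [htendsto.eventually h] with τ hτ
    simpa [hline0] using hτ
  have hderiv' : deriv (f ∘ line) =ᶠ[𝓝 0] fun τ => ⟪g (line τ), ξ⟫ :=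
    hderiv.mono fun τ => HasDerivAt.deriv
  rw [← hsecond.deriv, ← hderiv'.deriv_eq]
  exact deriv_deriv_nonpos_of_isLocalMax hmax hderiv.self_of_nhds.continuousAt

end SecondOrder

section Matrix

variable {ι : Type*} [Fintype ι]

open scoped MatrixOrder Matrix.Norms.L2Operator in
lemma sum_mul_nonneg_of_posSemidef {c M : Matrix ι ι ℝ} (hM : M.PosSemidef)
    (hc : ∀ ξ : ι → ℝ, 0 ≤ ∑ i, ∑ j, c i j * ξ i * ξ j) : 0 ≤ ∑ i, ∑ j, c i j * M i j := by
  classical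
  obtain ⟨B, hB⟩ := CStarAlgebra.nonneg_iff_eq_star_mul_self.1 hM.nonneg
  have hentry : ∀ i j, M i j = ∑ k, B k i * B k j := fun i j => by
    simp [hB, Matrix.mul_apply, Matrix.star_eq_conjTranspose]
  calc 0 ≤ ∑ k, ∑ i, ∑ j, c i j * B k i * B k j := Finset.sum_nonneg fun k _ => hc (B k)
    _ = ∑ i, ∑ j, ∑ k, c i j * B k i * B k j := by
        rw [Finset.sum_comm]; exact Finset.sum_congr rfl fun i _ => Finset.sum_comm
    _ = ∑ i, ∑ j, c i j * M i j := by simp only [hentry, Finset.mul_sum, mul_assoc]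

lemma trace_le_mul_sum_mul_of_elliptic {a M : Matrix ι ι ℝ} {ν : ℝ} (hν : 0 < ν)
    (hM : M.PosSemidef) (ha : ∀ ξ : ι → ℝ, ν⁻¹ * ∑ i, ξ i ^ 2 ≤ ∑ i, ∑ j, a i j * ξ i * ξ j) :
    M.trace ≤ ν * ∑ i, ∑ j, a i j * M i j := by
  classical
  have hsplit (P : Matrix ι ι ℝ) :
      ∑ i, ∑ j, (a - ν⁻¹ • 1) i j * P i j = ∑ i, ∑ j, a i j * P i j - ν⁻¹ * P.trace := by
    simp [sub_mul, Matrix.one_apply, Finset.sum_sub_distrib, Matrix.trace, Finset.mul_sum]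
  have h := sum_mul_nonneg_of_posSemidef (c := a - ν⁻¹ • 1) hM fun ξ => by
    have hξ := hsplit (Matrix.vecMulVec ξ ξ)
    simp only [Matrix.trace, Matrix.diag_apply, Matrix.vecMulVec_apply, ← mul_assoc, ← sq] at hξ
    exact hξ ▸ sub_nonneg.2 (ha ξ)
  rwa [hsplit, sub_nonneg, inv_mul_le_iff₀ hν] at h

lemma det_le_trace_pow [DecidableEq ι] {M : Matrix ι ι ℝ} (hM : M.PosSemidef) :
    M.det ≤ M.trace ^ Fintype.card ι := by
  have hdet : M.det = ∏ i, hM.1.eigenvalues i := by simpa using hM.1.det_eq_prod_eigenvalues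
  have htrace : M.trace = ∑ i, hM.1.eigenvalues i := by simpa using hM.1.trace_eq_sum_eigenvalues
  calc M.det = ∏ i, hM.1.eigenvalues i := hdet
    _ ≤ ∏ _i : ι, M.trace := Finset.prod_le_prod (fun i _ => hM.eigenvalues_nonneg i) fun i hi =>
        htrace ▸ Finset.single_le_sum (fun j _ => hM.eigenvalues_nonneg j) hi
    _ = M.trace ^ Fintype.card ι := by simp

lemma det_le_mul_sum_mul_pow [DecidableEq ι] {a M : Matrix ι ι ℝ} {ν : ℝ} (hν : 0 < ν)
    (hM : M.PosSemidef) (ha : ∀ ξ : ι → ℝ, ν⁻¹ * ∑ i, ξ i ^ 2 ≤ ∑ i, ∑ j, a i j * ξ i * ξ j) :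
    M.det ≤ (ν * ∑ i, ∑ j, a i j * M i j) ^ Fintype.card ι :=
  (det_le_trace_pow hM).trans
    (pow_le_pow_left₀ hM.trace_nonneg (trace_le_mul_sum_mul_of_elliptic hν hM ha) _)

lemma trace_le_card_mul_of_sum_sq_le {a : Matrix ι ι ℝ} {ν : ℝ} (hν : 0 ≤ ν)
    (ha : ∑ i, ∑ j, a i j ^ 2 ≤ ν ^ 2) : a.trace ≤ Fintype.card ι * ν := by
  have hdiag : ∀ i, a i i ≤ ν := fun i => by
    refine le_of_sq_le_sq (le_trans ?_ ha) hν
    calc a i i ^ 2 ≤ ∑ j, a i j ^ 2 := Finset.single_le_sum (f := fun j => a i j ^ 2)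
          (fun j _ => sq_nonneg _) (Finset.mem_univ i)
      _ ≤ ∑ i, ∑ j, a i j ^ 2 := Finset.single_le_sum (f := fun i => ∑ j, a i j ^ 2)
          (fun i _ => Finset.sum_nonneg fun j _ => sq_nonneg _) (Finset.mem_univ i)
  calc a.trace ≤ ∑ _i : ι, ν := Finset.sum_le_sum fun i _ => hdiag i
    _ = Fintype.card ι * ν := by simp

end Matrix

section Annulus

lemma exists_setLIntegral_le_div {E ι : Type*} [MeasurableSpace E] {s : Finset ι}
    (hs : s.Nonempty) {A : ι → Set E} (hA : ∀ i ∈ s, MeasurableSet (A i))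
    (hdisj : (s : Set ι).PairwiseDisjoint A) (μ : Measure E) (f : E → ℝ≥0∞) :
    ∃ i ∈ s, ∫⁻ x in A i, f x ∂μ ≤ (∫⁻ x, f x ∂μ) / s.card := by
  obtain ⟨i, hi, hmin⟩ := Finset.exists_min_image s (fun i => ∫⁻ x in A i, f x ∂μ) hs
  refine ⟨i, hi, ?_⟩
  rw [ENNReal.le_div_iff_mul_le (.inl (by simpa using hs.ne_empty)) (.inl (by simp)), mul_comm]
  calc s.card * ∫⁻ x in A i, f x ∂μ ≤ ∑ j ∈ s, ∫⁻ x in A j, f x ∂μ := by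
        simpa using Finset.card_nsmul_le_sum s _ _ hmin
    _ = ∫⁻ x in ⋃ j ∈ s, A j, f x ∂μ := (lintegral_biUnion_finset hdisj hA f).symm
    _ ≤ ∫⁻ x, f x ∂μ := setLIntegral_le_lintegral _ _

/-- Pigeonhole over `K` disjoint annuli of width `2δ`; `R` is the mean radius of one of them. -/
lemma exists_radius_forall_setLIntegral_ball_le {E : Type*} [PseudoMetricSpace E]
    [MeasurableSpace E] [OpensMeasurableSpace E] (μ : Measure E) (f : E → ℝ≥0∞) (y : E) (r₀ : ℝ)
    {δ : ℝ} (hδ : 0 ≤ δ) {K : ℕ} (hK : K ≠ 0) :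
    ∃ R ∈ Icc (r₀ + δ) (r₀ + 2 * K * δ - δ), ∀ z, dist z y = R →
      ∫⁻ x in ball z δ, f x ∂μ ≤ (∫⁻ x, f x ∂μ) / K := by
  set A : ℕ → Set E := fun j => {x | dist x y ∈ Ioo (r₀ + 2 * j * δ) (r₀ + 2 * (j + 1 : ℕ) * δ)}
  have hA : ∀ j, MeasurableSet (A j) := fun j =>
    ((isOpen_Ioo.preimage (continuous_id.dist continuous_const))).measurableSet
  have hdisj : Pairwise (Function.onFun Disjoint A) := by
    have hmono : Monotone fun j : ℕ => r₀ + 2 * j * δ := fun i j hij => by dsimp only; gcongr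
    exact fun i j hij => (hmono.pairwise_disjoint_on_Ioo_succ hij).preimage _
  obtain ⟨j, hj, hle⟩ := exists_setLIntegral_le_div (Finset.nonempty_range_iff.2 hK)
    (fun j _ => hA j) (hdisj.set_pairwise _) μ f
  rw [Finset.card_range] at hle
  have hjK : (j : ℝ) + 1 ≤ K := by exact_mod_cast Finset.mem_range.1 hj
  refine ⟨r₀ + (2 * j + 1) * δ, ⟨?_, ?_⟩, fun z hz => ?_⟩
  · nlinarith [mul_nonneg j.cast_nonneg hδ]
  · nlinarith
  refine (lintegral_mono_set fun x hx => ?_).trans hle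
  have hxz : dist x z < δ := hx
  have hxy := dist_triangle x z y
  have hzy := dist_triangle_left z y x
  refine ⟨?_, ?_⟩ <;> push_cast <;> linarith

end Annulus

section Integration

lemma ofReal_sub_eq_lintegral_deriv {G : ℝ → ℝ} {t₀ t₁ : ℝ} (h : t₀ ≤ t₁)
    (hG : AbsolutelyContinuousOnInterval G t₀ t₁) (hmono : MonotoneOn G (Icc t₀ t₁)) :
    ENNReal.ofReal (G t₁ - G t₀) = ∫⁻ t in Ioo t₀ t₁, ENNReal.ofReal (deriv G t) := by
  have hint : IntegrableOn (deriv G) (Ioo t₀ t₁) :=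
    (intervalIntegrable_iff_integrableOn_Ioo_of_le h).1 hG.intervalIntegrable_deriv
  have hnonneg : 0 ≤ᵐ[volume.restrict (Ioo t₀ t₁)] deriv G := by
    refine ae_restrict_of_forall_mem measurableSet_Ioo fun t ht => ?_
    rw [← derivWithin_of_mem_nhds (Icc_mem_nhds ht.1 ht.2)]
    exact hmono.derivWithin_nonneg
  rw [← hG.integral_deriv_eq_sub, intervalIntegral.integral_of_le h,
    integral_Ioc_eq_integral_Ioo, ofReal_integral_eq_lintegral_ofReal hint hnonneg]

lemma lintegral_le_lintegral_abs_det_fderiv_mul {E : Type*} [NormedAddCommGroup E]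
    [NormedSpace ℝ E] [FiniteDimensional ℝ E] [MeasurableSpace E] [BorelSpace E]
    (μ : Measure E) [μ.IsAddHaarMeasure] {s : Set E} (hs : MeasurableSet s) {f : E → E}
    {f' : E → E →L[ℝ] E} (hf : ∀ x ∈ s, HasFDerivWithinAt f (f' x) s x) {F q : E → ℝ}
    (hF : Measurable F) (hF0 : ∀ p, 0 ≤ F p) (hq : Measurable q) (hq0 : ∀ x, 0 ≤ q x)
    (h : ∀ p, 0 < F p → ∃ x ∈ s, f x = p ∧ F p ≤ q x) :
    ∫⁻ p, ENNReal.ofReal (F p) ∂μ ≤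
      ∫⁻ x in s, ENNReal.ofReal |(f' x).det| * ENNReal.ofReal (q x) ∂μ := by
  have hdensity : ∫⁻ x, ENNReal.ofReal (q x)
        ∂(μ.restrict s).withDensity (fun x => ENNReal.ofReal |(f' x).det|) =
      ∫⁻ x in s, ENNReal.ofReal |(f' x).det| * ENNReal.ofReal (q x) ∂μ :=
    lintegral_withDensity_eq_lintegral_mul₀ (aemeasurable_ofReal_abs_det_fderivWithin μ hs hf)
      hq.ennreal_ofReal.aemeasurable
  rw [← hdensity, lintegral_eq_lintegral_meas_lt _ (.of_forall hF0) hF.aemeasurable,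
    lintegral_eq_lintegral_meas_lt _ (.of_forall hq0) hq.aemeasurable]
  refine setLIntegral_mono' measurableSet_Ioi fun c hc => ?_
  have hlevel : MeasurableSet {x | c < q x} := measurableSet_lt measurable_const hq
  have hsub : {p | c < F p} ⊆ f '' ({x | c < q x} ∩ s) := by
    intro p hp
    obtain ⟨x, hxs, hxp, hle⟩ := h p (lt_trans hc hp)
    exact ⟨x, ⟨lt_of_lt_of_le hp hle, hxs⟩, hxp⟩
  rw [withDensity_apply _ hlevel, Measure.restrict_restrict hlevel]
  exact (measure_mono hsub).trans <| addHaar_image_le_lintegral_abs_det_fderiv μ (hlevel.inter hs)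
    fun x hx => (hf x hx.2).mono inter_subset_right

variable {E : Type*} [NormedAddCommGroup E] [NormedSpace ℝ E] [FiniteDimensional ℝ E]
  [MeasurableSpace E] [BorelSpace E] (μ : Measure E) [μ.IsAddHaarMeasure]

lemma ofReal_mul_pow_le_lintegral_inv_norm_add_pow {R k : ℝ} (hR : 0 ≤ R) (hk : 0 < k) :
    ENNReal.ofReal (μ.real (ball 0 1) * (R / (R + k)) ^ finrank ℝ E) ≤
      ∫⁻ p in closedBall 0 R, ENNReal.ofReal ((‖p‖ + k) ^ finrank ℝ E)⁻¹ ∂μ := by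
  calc ENNReal.ofReal (μ.real (ball 0 1) * (R / (R + k)) ^ finrank ℝ E)
      = ENNReal.ofReal ((R + k) ^ finrank ℝ E)⁻¹ * μ (closedBall 0 R) := by
        rw [Measure.addHaar_closedBall _ _ hR, ← ofReal_measureReal,
          ← ENNReal.ofReal_mul (by positivity), ← ENNReal.ofReal_mul (by positivity), div_pow]
        ring_nf
    _ = ∫⁻ _ in closedBall (0 : E) R, ENNReal.ofReal ((R + k) ^ finrank ℝ E)⁻¹ ∂μ :=
        (setLIntegral_const _ _).symm
    _ ≤ ∫⁻ p in closedBall 0 R, ENNReal.ofReal ((‖p‖ + k) ^ finrank ℝ E)⁻¹ ∂μ := by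
        refine setLIntegral_mono' measurableSet_closedBall fun p hp => ?_
        have : ‖p‖ ≤ R := mem_closedBall_zero_iff.1 hp
        gcongr

lemma setIntegral_pow_mul_inv_two_mul_pow {d : ℕ} (hd : d ≠ 0) {k R : ℝ} (hk : 0 < k)
    (hkR : k ≤ R) :
    ∫ y in Ioc k R, y ^ (d - 1) * ((2 * y) ^ d)⁻¹ = (2 ^ d)⁻¹ * Real.log (R / k) := by
  calc ∫ y in Ioc k R, y ^ (d - 1) * ((2 * y) ^ d)⁻¹
      = ∫ y in Ioc k R, (2 ^ d)⁻¹ * y⁻¹ := by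
        refine setIntegral_congr_fun measurableSet_Ioc fun y hy => ?_
        have hy0 : y ≠ 0 := (hk.trans hy.1).ne'
        obtain ⟨m, rfl⟩ := Nat.exists_eq_succ_of_ne_zero hd
        simp only [Nat.succ_sub_one, mul_pow, pow_succ]
        field_simp
    _ = (2 ^ d)⁻¹ * Real.log (R / k) := by
        rw [integral_const_mul, ← intervalIntegral.integral_of_le hkR,
          integral_inv_of_pos hk (hk.trans_le hkR)]

lemma ofReal_log_le_lintegral_inv_norm_add_pow [Nontrivial E] {R k : ℝ} (hk : 0 < k) (hkR : k ≤ R) :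
    ENNReal.ofReal (finrank ℝ E * (μ.real (ball 0 1) * ((2 ^ finrank ℝ E)⁻¹ * Real.log (R / k)))) ≤
      ∫⁻ p in closedBall 0 R, ENNReal.ofReal ((‖p‖ + k) ^ finrank ℝ E)⁻¹ ∂μ := by
  set d := finrank ℝ E
  set w : ℝ → ℝ := (Ioc k R).indicator fun y => ((2 * y) ^ d)⁻¹
  have hw : ∀ p : E, ‖w ‖p‖‖ₑ ≤
      (closedBall 0 R).indicator (fun p => ENNReal.ofReal ((‖p‖ + k) ^ d)⁻¹) p := fun p => by
    by_cases hp : ‖p‖ ∈ Ioc k R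
    · have hpos : 0 < ‖p‖ := hk.trans hp.1
      rw [indicator_of_mem (mem_closedBall_zero_iff.2 hp.2)]
      simp only [w, indicator_of_mem hp]
      rw [Real.enorm_of_nonneg (by positivity)]
      gcongr
      linarith [hp.1]
    · simp [w, indicator_of_notMem hp]
  have hradial : ∫ y in Ioi (0 : ℝ), y ^ (d - 1) • w y = (2 ^ d)⁻¹ * Real.log (R / k) := by
    have hindicator : (fun y => y ^ (d - 1) • w y) =
        (Ioc k R).indicator fun y => y ^ (d - 1) * ((2 * y) ^ d)⁻¹ :=
      funext fun y => (indicator_mul_right (Ioc k R) (· ^ (d - 1)) _).symm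
    rw [hindicator, setIntegral_indicator measurableSet_Ioc,
      inter_eq_right.2 fun y hy => mem_Ioi.2 (hk.trans hy.1),
      setIntegral_pow_mul_inv_two_mul_pow finrank_pos.ne' hk hkR]
  have hpolar : ∫ p, w ‖p‖ ∂μ = d * (μ.real (ball 0 1) * ((2 ^ d)⁻¹ * Real.log (R / k))) := by
    rw [integral_fun_norm_addHaar, hradial]
    simp [d]
  rw [← hpolar, ← lintegral_indicator measurableSet_closedBall]
  calc ENNReal.ofReal (∫ p, w ‖p‖ ∂μ) ≤ ‖∫ p, w ‖p‖ ∂μ‖ₑ := Real.ofReal_le_enorm _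
    _ ≤ ∫⁻ p, ‖w ‖p‖‖ₑ ∂μ := enorm_integral_le_lintegral_enorm _
    _ ≤ _ := lintegral_mono hw

end Integration

/-- The spatial gradient `∇ₓu` at a point of space-time. -/
def spatialGrad (u : En n × ℝ → ℝ) (X : En n × ℝ) : En n :=
  WithLp.toLp 2 fun i => Dx u i X

/-- The spatial Hessian `D²ₓu`. Its `i`-th row is the derivative of the `i`-th component of
`spatialGrad u`, so that it is the Jacobian matrix of `spatialGrad u` even where the mixed
derivatives do not commute. -/
def spatialHess (u : En n × ℝ → ℝ) (X : En n × ℝ) : Matrix (Fin n) (Fin n) ℝ :=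
  Matrix.of fun i j => Dxx u j i X

namespace IsC21

variable {u v : En n × ℝ → ℝ} {Q Q' : Set (En n × ℝ)} {X : En n × ℝ}

lemma mono (h : IsC21 u Q) (hQ : Q' ⊆ Q) : IsC21 u Q' where
  cont := h.cont.mono hQ
  diff_t X hX := h.diff_t X (hQ hX)
  diff_x X hX := h.diff_x X (hQ hX)
  diff_xx j X hX := h.diff_xx j X (hQ hX)
  cont_t := h.cont_t.mono hQ
  cont_x i := (h.cont_x i).mono hQ
  cont_xx i j := (h.cont_xx i j).mono hQ

lemma hasDerivAt (h : IsC21 u Q) (hX : X ∈ Q) :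
    HasDerivAt (fun t => u (X.1, t)) (Dt u X) X.2 :=
  (h.diff_t X hX).hasDerivAt

lemma hasGradientAt (h : IsC21 u Q) (hX : X ∈ Q) :
    HasGradientAt (fun x => u (x, X.2)) (spatialGrad u X) X.1 := by
  have hfderiv : fderiv ℝ (fun x => u (x, X.2)) X.1 = innerSL ℝ (spatialGrad u X) :=
    ContinuousLinearMap.coe_injective <| (EuclideanSpace.basisFun (Fin n) ℝ).toBasis.ext
      fun i => by simp [spatialGrad, Dx, EuclideanSpace.inner_single_right]
  exact hasGradientAt_iff_hasFDerivAt.2 (hfderiv ▸ (h.diff_x X hX).hasFDerivAt)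

lemma hasFDerivAt_spatialGrad (h : IsC21 u Q) (hX : X ∈ Q) :
    HasFDerivAt (fun x => spatialGrad u (x, X.2))
      (Matrix.toEuclideanCLM (𝕜 := ℝ) (spatialHess u X)) X.1 := by
  rw [← hasFDerivWithinAt_univ, hasFDerivWithinAt_euclidean]
  intro i
  have hfderiv : fderiv ℝ (fun x => Dx u i (x, X.2)) X.1 =
      PiLp.proj 2 (fun _ => ℝ) i ∘SL Matrix.toEuclideanCLM (𝕜 := ℝ) (spatialHess u X) :=
    ContinuousLinearMap.coe_injective <| (EuclideanSpace.basisFun (Fin n) ℝ).toBasis.ext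
      fun j => by simp [spatialHess, Dxx, Dx]
  exact (hfderiv ▸ (h.diff_xx i X hX).hasFDerivAt).hasFDerivWithinAt

lemma continuousOn_spatialGrad (h : IsC21 u Q) : ContinuousOn (spatialGrad u) Q :=
  (PiLp.continuous_toLp 2 _).comp_continuousOn (continuousOn_pi.2 h.cont_x)

lemma continuousOn_spatialHess (h : IsC21 u Q) : ContinuousOn (spatialHess u) Q :=
  continuousOn_pi.2 fun i => continuousOn_pi.2 fun j => h.cont_xx j i

lemma isSymm_spatialHess (h : IsC21 u Q) (hQ : IsOpen Q) (hX : X ∈ Q) :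
    (spatialHess u X).IsSymm := by
  have hopen : ∀ᶠ x in 𝓝 X.1, (x, X.2) ∈ Q :=
    (Continuous.prodMk_left X.2).continuousAt.eventually_mem (hQ.mem_nhds hX)
  have hfst : ∀ᶠ x in 𝓝 X.1, HasFDerivAt (fun x => u (x, X.2))
      (innerSL ℝ (spatialGrad u (x, X.2))) x :=
    hopen.mono fun x hx => (h.hasGradientAt hx).hasFDerivAt
  have hsnd := (innerSL ℝ (E := En n)).hasFDerivAt.comp X.1 (h.hasFDerivAt_spatialGrad hX)
  ext i j
  have hinner : ⟪Matrix.toEuclideanCLM (𝕜 := ℝ) (spatialHess u X) (EuclideanSpace.single i 1),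
        EuclideanSpace.single j 1⟫ = ⟪Matrix.toEuclideanCLM (𝕜 := ℝ) (spatialHess u X)
        (EuclideanSpace.single j 1), EuclideanSpace.single i 1⟫ :=
    second_derivative_symmetric_of_eventually_of_real hfst hsnd _ _
  simpa [EuclideanSpace.inner_single_right] using hinner

lemma Dt_sub (hu : IsC21 u Q) (hv : IsC21 v Q) (hX : X ∈ Q) :
    Dt (u - v) X = Dt u X - Dt v X :=
  deriv_fun_sub (hu.diff_t X hX) (hv.diff_t X hX)

lemma Dx_sub (hu : IsC21 u Q) (hv : IsC21 v Q) (i : Fin n) (hX : X ∈ Q) :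
    Dx (u - v) i X = Dx u i X - Dx v i X := by
  simp [Dx, fderiv_fun_sub (hu.diff_x X hX) (hv.diff_x X hX)]

lemma eventually_Dx_sub (hu : IsC21 u Q) (hv : IsC21 v Q) (hQ : IsOpen Q) (i : Fin n)
    (hX : X ∈ Q) : (fun x => Dx (u - v) i (x, X.2)) =ᶠ[𝓝 X.1]
      (fun x => Dx u i (x, X.2)) - fun x => Dx v i (x, X.2) :=
  ((Continuous.prodMk_left X.2).continuousAt.eventually_mem (hQ.mem_nhds hX)).mono
    fun _ hx => hu.Dx_sub hv i hx

lemma Dxx_sub (hu : IsC21 u Q) (hv : IsC21 v Q) (hQ : IsOpen Q) (i j : Fin n) (hX : X ∈ Q) :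
    Dxx (u - v) i j X = Dxx u i j X - Dxx v i j X := by
  rw [Dxx, Dx, (hu.eventually_Dx_sub hv hQ j hX).fderiv_eq,
    fderiv_sub (hu.diff_xx j X hX) (hv.diff_xx j X hX)]
  rfl

lemma sub (hu : IsC21 u Q) (hv : IsC21 v Q) (hQ : IsOpen Q) : IsC21 (u - v) Q where
  cont := hu.cont.sub hv.cont
  diff_t X hX := (hu.diff_t X hX).sub (hv.diff_t X hX)
  diff_x X hX := (hu.diff_x X hX).sub (hv.diff_x X hX)
  diff_xx j X hX := ((hu.diff_xx j X hX).sub (hv.diff_xx j X hX)).congr_of_eventuallyEq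
    (hu.eventually_Dx_sub hv hQ j hX)
  cont_t := (hu.cont_t.sub hv.cont_t).congr fun _ hX => hu.Dt_sub hv hX
  cont_x i := ((hu.cont_x i).sub (hv.cont_x i)).congr fun _ hX => hu.Dx_sub hv i hX
  cont_xx i j := ((hu.cont_xx i j).sub (hv.cont_xx i j)).congr fun _ hX => hu.Dxx_sub hv hQ i j hX

lemma Lop_sub (hu : IsC21 u Q) (hv : IsC21 v Q) (hQ : IsOpen Q) (hX : X ∈ Q)
    (a : En n × ℝ → Matrix (Fin n) (Fin n) ℝ) (b : En n × ℝ → En n) :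
    Lop a b (u - v) X = Lop a b u X - Lop a b v X := by
  simp only [Lop, hu.Dxx_sub hv hQ _ _ hX, hu.Dx_sub hv _ hX, mul_sub, Finset.sum_sub_distrib]
  ring

lemma continuousOn_abs_det_mul (hv : IsC21 v Q) {w : En n → ℝ} (hw : Continuous w) :
    ContinuousOn (fun X => ENNReal.ofReal |(spatialHess v X).det| *
      ENNReal.ofReal (w (spatialGrad v X) * Dt v X)) Q := by
  simp_rw [← ENNReal.ofReal_mul (abs_nonneg _)]
  refine ENNReal.continuous_ofReal.comp_continuousOn (.mul ?_ (.mul ?_ hv.cont_t))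
  · exact ((Continuous.matrix_det continuous_id).comp_continuousOn hv.continuousOn_spatialHess).abs
  · exact hw.comp_continuousOn hv.continuousOn_spatialGrad

end IsC21

lemma Lop_eq_sum_add_inner (a : En n × ℝ → Matrix (Fin n) (Fin n) ℝ) (b : En n × ℝ → En n)
    (u : En n × ℝ → ℝ) (X : En n × ℝ) :
    Lop a b u X = ∑ i, ∑ j, a X i j * Dxx u i j X + ⟪b X, spatialGrad u X⟫ := by
  simp [Lop, spatialGrad, PiLp.inner_apply, mul_comm]

section Barrier

/-- The quadratic barrier `A |x - y|² + c (T - t) + e`. -/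
def barrier (A c e : ℝ) (y : En n) (T : ℝ) (X : En n × ℝ) : ℝ :=
  A * ‖X.1 - y‖ ^ 2 + c * (T - X.2) + e

variable {A c e : ℝ} {y : En n} {T : ℝ}

lemma hasDerivAt_barrier (x : En n) (t : ℝ) :
    HasDerivAt (fun t => barrier A c e y T (x, t)) (-c) t := by
  simpa [barrier] using
    (((hasDerivAt_id t).const_sub T).const_mul c).const_add (A * ‖x - y‖ ^ 2) |>.add_const e

lemma Dt_barrier : Dt (barrier A c e y T) = fun _ => -c :=
  funext fun X => (hasDerivAt_barrier X.1 X.2).deriv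

lemma hasFDerivAt_barrier (x : En n) (t : ℝ) :
    HasFDerivAt (fun x => barrier A c e y T (x, t)) ((2 * A) • innerSL ℝ (x - y)) x := by
  have h := ((((hasFDerivAt_id x).sub_const y).norm_sq).const_mul A).add_const (c * (T - t) + e)
  simpa [barrier, add_assoc] using h.congr_fderiv (by ext; simp; ring)

lemma Dx_barrier (i : Fin n) :
    Dx (barrier A c e y T) i = fun X => 2 * A * (X.1 i - y i) := by
  ext X
  simp [Dx, (hasFDerivAt_barrier X.1 X.2).fderiv, EuclideanSpace.inner_single_right]

lemma hasFDerivAt_Dx_barrier (i : Fin n) (x : En n) (t : ℝ) :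
    HasFDerivAt (fun x => Dx (barrier A c e y T) i (x, t))
      ((2 * A) • EuclideanSpace.proj (𝕜 := ℝ) i) x := by
  simp only [Dx_barrier]
  exact (((EuclideanSpace.proj (𝕜 := ℝ) i).hasFDerivAt).sub_const (y i)).const_mul (2 * A)

lemma Dxx_barrier (i j : Fin n) :
    Dxx (barrier A c e y T) i j = fun _ => 2 * A * (1 : Matrix (Fin n) (Fin n) ℝ) i j := by
  ext X
  rw [Dxx, Dx, (hasFDerivAt_Dx_barrier j X.1 X.2).fderiv]
  simp [Matrix.one_apply, eq_comm]

lemma isC21_barrier (Q : Set (En n × ℝ)) : IsC21 (barrier A c e y T) Q where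
  cont := by unfold barrier; fun_prop
  diff_t X _ := (hasDerivAt_barrier X.1 X.2).differentiableAt
  diff_x X _ := (hasFDerivAt_barrier X.1 X.2).differentiableAt
  diff_xx j X _ := (hasFDerivAt_Dx_barrier j X.1 X.2).differentiableAt
  cont_t := Dt_barrier ▸ continuousOn_const
  cont_x i := by rw [Dx_barrier]; fun_prop
  cont_xx i j := Dxx_barrier i j ▸ continuousOn_const

lemma Lop_barrier (a : En n × ℝ → Matrix (Fin n) (Fin n) ℝ) (b : En n × ℝ → En n)
    (X : En n × ℝ) :
    Lop a b (barrier A c e y T) X = 2 * A * ((a X).trace + ⟪b X, X.1 - y⟫) := by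
  simp only [Lop, Dxx_barrier, Dx_barrier, Matrix.one_apply, Matrix.trace, PiLp.inner_apply,
    mul_add, Finset.mul_sum]
  congr 1
  · simp [mul_comm]
  · exact Finset.sum_congr rfl fun i _ => by simp; ring

end Barrier

section RunningMax

open scoped NNReal

/-- The running maximum `t ↦ max {f z s | z ∈ Z, t₀ ≤ s ≤ t}` for `t ∈ [t₀, t₁]`. The times are
parametrized as `min s t` with `s ∈ [t₀, t₁]`, so that the supremum is over a fixed set. -/
def runningMax {Z : Type*} (f : Z → ℝ → ℝ) (t₀ t₁ t : ℝ) : ℝ :=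
  ⨆ q : Z × Icc t₀ t₁, f q.1 (min q.2 t)

variable {Z : Type*} [TopologicalSpace Z] [CompactSpace Z] {f : Z → ℝ → ℝ} {t₀ t₁ s t : ℝ}

lemma continuous_runningMax {P : Type*} [TopologicalSpace P] {f : P → Z → ℝ → ℝ}
    (hf : Continuous fun q : P × Z × ℝ => f q.1 q.2.1 q.2.2) :
    Continuous fun q : P × ℝ => runningMax (f q.1) t₀ t₁ q.2 := by
  have h := isCompact_univ.continuous_sSup
    (f := fun (q : P × ℝ) (z : Z × Icc t₀ t₁) => f q.1 z.1 (min z.2 q.2))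
    (hf.comp (f := fun r : (P × ℝ) × (Z × Icc t₀ t₁) => (r.1.1, r.2.1, min (r.2.2 : ℝ) r.1.2))
      (by fun_prop))
  simpa only [image_univ] using! h

lemma le_runningMax (hf : Continuous f.uncurry) (z : Z) (hs : s ∈ Icc t₀ t₁) (hst : s ≤ t) :
    f z s ≤ runningMax f t₀ t₁ t := by
  have hbdd : BddAbove (range fun q : Z × Icc t₀ t₁ => f q.1 (min q.2 t)) :=
    (isCompact_range (hf.comp (f := fun q : Z × Icc t₀ t₁ => (q.1, min (q.2 : ℝ) t))
      (by fun_prop))).bddAbove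
  simpa [min_eq_left hst, runningMax] using le_ciSup hbdd (z, ⟨s, hs⟩)

lemma exists_eq_runningMax [Nonempty Z] (hf : Continuous f.uncurry) (h : t₀ ≤ t₁) (t : ℝ) :
    ∃ z, ∃ s ∈ Icc t₀ t₁, runningMax f t₀ t₁ t = f z (min s t) := by
  have : Nonempty (Icc t₀ t₁) := nonempty_Icc_subtype h
  obtain ⟨q, -, hq⟩ := isCompact_univ.exists_sSup_image_eq univ_nonempty
    (hf.comp (f := fun q : Z × Icc t₀ t₁ => (q.1, min (q.2 : ℝ) t)) (by fun_prop)).continuousOn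
  exact ⟨q.1, q.2, q.2.2, by rw [image_univ] at hq; exact hq⟩

lemma monotoneOn_runningMax [Nonempty Z] (hf : Continuous f.uncurry) (h : t₀ ≤ t₁) :
    MonotoneOn (runningMax f t₀ t₁) (Icc t₀ t₁) := fun t ht t' _ htt' => by
  obtain ⟨z, s, hs, hmax⟩ := exists_eq_runningMax hf h t
  exact hmax ▸ le_runningMax hf z ⟨le_min hs.1 ht.1, (min_le_left _ _).trans hs.2⟩
    ((min_le_right _ _).trans htt')

lemma lipschitzOnWith_runningMax [Nonempty Z] (hf : Continuous f.uncurry) (h : t₀ ≤ t₁) {L : ℝ≥0}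
    (hL : ∀ z, LipschitzWith L (f z)) :
    LipschitzOnWith L (runningMax f t₀ t₁) (Icc t₀ t₁) := by
  refine LipschitzOnWith.of_le_add_mul _ fun t _ t' ht' => ?_
  obtain ⟨z, s, hs, hmax⟩ := exists_eq_runningMax hf h t
  calc runningMax f t₀ t₁ t = f z (min s t) := hmax
    _ ≤ f z (min s t') + L * dist (min s t) (min s t') := (hL z).le_add_mul _ _
    _ ≤ runningMax f t₀ t₁ t' + L * dist t t' := by
        gcongr
        · exact le_runningMax hf z ⟨le_min hs.1 ht'.1, (min_le_left _ _).trans hs.2⟩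
            (min_le_right _ _)
        · simpa using (LipschitzWith.id.const_min s).dist_le_mul t t'

end RunningMax

/-- Regularity of `v` on the cylinder `B_ρ(y) × (t₀, t₁)` under which the parabolic maximum
principle is proved: `C^{2,1}` inside, continuous up to the boundary and Lipschitz in time. -/
structure IsRegularOnCylinder (v : En n × ℝ → ℝ) (y : En n) (ρ t₀ t₁ : ℝ) : Prop where
  isC21 : IsC21 v (box y ρ t₀ t₁)
  continuousOn : ContinuousOn v (closedBall y ρ ×ˢ Icc t₀ t₁)
  lipschitz : ∃ L, ∀ x ∈ closedBall y ρ, LipschitzOnWith L (fun t => v (x, t)) (Icc t₀ t₁)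

/-- The running maximum in time of `v (z, s) - ⟪p, z - y⟫` over `z` in the closed ball, truncated
from below at `‖p‖ ρ`: a parabolic analogue of the Legendre transform, which increases at the
time `t` only if the graph of `v` on `{s ≤ t}` touches a plane of slope `p` from below at time
`t`. The inner `max` and `min` extend `v` constantly in time outside of `[t₀, t₁]`. -/
def parabolicConj (v : En n × ℝ → ℝ) (y : En n) (ρ t₀ t₁ : ℝ) (p : En n) (t : ℝ) : ℝ :=
  max (‖p‖ * ρ) (runningMax
    (fun (z : closedBall y ρ) s => v (z, max t₀ (min t₁ s)) - ⟪p, z - y⟫) t₀ t₁ t)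

lemma norm_mul_le_parabolicConj (v : En n × ℝ → ℝ) (y : En n) (ρ t₀ t₁ : ℝ) (p : En n) (t : ℝ) :
    ‖p‖ * ρ ≤ parabolicConj v y ρ t₀ t₁ p t :=
  le_max_left _ _

namespace IsRegularOnCylinder

variable {v : En n × ℝ → ℝ} {y : En n} {ρ t₀ t₁ : ℝ}

lemma continuous_extend (hv : IsRegularOnCylinder v y ρ t₀ t₁) (h : t₀ ≤ t₁) :
    Continuous fun q : En n × closedBall y ρ × ℝ =>
      v (q.2.1, max t₀ (min t₁ q.2.2)) - ⟪q.1, (q.2.1 : En n) - y⟫ := by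
  refine .sub (hv.continuousOn.comp_continuous (by fun_prop) fun q => ?_) (by fun_prop)
  exact ⟨q.2.1.2, le_max_left _ _, max_le h (min_le_left _ _)⟩

lemma continuous_extend_apply (hv : IsRegularOnCylinder v y ρ t₀ t₁) (h : t₀ ≤ t₁) (p : En n) :
    Continuous (Function.uncurry fun (z : closedBall y ρ) s =>
      v (z, max t₀ (min t₁ s)) - ⟪p, z - y⟫) :=
  (hv.continuous_extend h).comp (by fun_prop : Continuous fun q : closedBall y ρ × ℝ => (p, q))

lemma continuous_parabolicConj (hv : IsRegularOnCylinder v y ρ t₀ t₁) (h : t₀ ≤ t₁) :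
    Continuous (Function.uncurry (parabolicConj v y ρ t₀ t₁)) :=
  .max (by fun_prop) (continuous_runningMax (f := fun p (z : closedBall y ρ) s =>
    v (z, max t₀ (min t₁ s)) - ⟪p, z - y⟫) (hv.continuous_extend h))

lemma le_parabolicConj (hv : IsRegularOnCylinder v y ρ t₀ t₁) {x : En n} (hx : x ∈ closedBall y ρ)
    {s t : ℝ} (hs : s ∈ Icc t₀ t₁) (hst : s ≤ t) (p : En n) :
    v (x, s) - ⟪p, x - y⟫ ≤ parabolicConj v y ρ t₀ t₁ p t := by
  refine le_max_of_le_right ?_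
  simpa [hs.1, hs.2] using
    le_runningMax (hv.continuous_extend_apply (hs.1.trans hs.2) p) ⟨x, hx⟩ hs hst

lemma parabolicConj_eq (hv : IsRegularOnCylinder v y ρ t₀ t₁) (hρ : 0 ≤ ρ) (p : En n) {t : ℝ}
    (ht : t ∈ Icc t₀ t₁) : parabolicConj v y ρ t₀ t₁ p t = ‖p‖ * ρ ∨
      ∃ x ∈ closedBall y ρ, ∃ s ∈ Icc t₀ t,
        parabolicConj v y ρ t₀ t₁ p t = v (x, s) - ⟪p, x - y⟫ := by
  have : Nonempty (closedBall y ρ) := ⟨y, mem_closedBall_self hρ⟩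
  refine (max_choice _ _).imp id fun hmax => ?_
  obtain ⟨z, s, hs, heq⟩ := exists_eq_runningMax
    (hv.continuous_extend_apply (ht.1.trans ht.2) p) (ht.1.trans ht.2) t
  have hmem : min s t ∈ Icc t₀ t := ⟨le_min hs.1 ht.1, min_le_right _ _⟩
  refine ⟨z, z.2, min s t, hmem, hmax.trans (heq.trans ?_)⟩
  rw [min_eq_right (hmem.2.trans ht.2), max_eq_right hmem.1]

lemma monotoneOn_parabolicConj (hv : IsRegularOnCylinder v y ρ t₀ t₁) (hρ : 0 ≤ ρ) (h : t₀ ≤ t₁)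
    (p : En n) : MonotoneOn (parabolicConj v y ρ t₀ t₁ p) (Icc t₀ t₁) :=
  have : Nonempty (closedBall y ρ) := ⟨y, mem_closedBall_self hρ⟩
  monotoneOn_const.max (monotoneOn_runningMax (hv.continuous_extend_apply h p) h)

lemma exists_lipschitzOnWith_parabolicConj (hv : IsRegularOnCylinder v y ρ t₀ t₁) (hρ : 0 ≤ ρ)
    (h : t₀ ≤ t₁) (p : En n) :
    ∃ L, LipschitzOnWith L (parabolicConj v y ρ t₀ t₁ p) (Icc t₀ t₁) := by
  have : Nonempty (closedBall y ρ) := ⟨y, mem_closedBall_self hρ⟩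
  obtain ⟨L, hL⟩ := hv.lipschitz
  have hclamp : LipschitzWith 1 fun s => max t₀ (min t₁ s) :=
    (LipschitzWith.id.const_min t₁).const_max t₀
  have hext : ∀ z : closedBall y ρ,
      LipschitzWith L fun s => v (z, max t₀ (min t₁ s)) - ⟪p, z - y⟫ := fun z => by
    have hcomp := (hL z z.2).comp (hclamp.lipschitzOnWith (s := univ)) fun s _ =>
      ⟨le_max_left _ _, max_le h (min_le_left _ _)⟩
    simpa [Function.comp_def] using
      (lipschitzOnWith_univ.1 hcomp).sub (LipschitzWith.const ⟪p, (z : En n) - y⟫)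
  refine ⟨L, ?_⟩
  have hmax := lipschitzOnWith_runningMax (hv.continuous_extend_apply h p) h hext
  simpa only [one_mul] using!
    (LipschitzWith.id.const_max (‖p‖ * ρ)).comp_lipschitzOnWith hmax

lemma ofReal_half_le_lintegral_deriv_parabolicConj (hv : IsRegularOnCylinder v y ρ t₀ t₁)
    (hρ : 0 < ρ) (h : t₀ ≤ t₁) (hbot : ∀ x ∈ closedBall y ρ, v (x, t₀) ≤ 0) {x₀ : En n}
    (hx₀ : x₀ ∈ closedBall y ρ) {m : ℝ} (hm : m ≤ v (x₀, t₁)) {p : En n}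
    (hp : p ∈ closedBall 0 (m / (4 * ρ))) :
    ENNReal.ofReal (m / 2) ≤
      ∫⁻ t in Ioo t₀ t₁, ENNReal.ofReal (deriv (parabolicConj v y ρ t₀ t₁ p) t) := by
  obtain ⟨L, hL⟩ := hv.exists_lipschitzOnWith_parabolicConj hρ.le h p
  rw [← ofReal_sub_eq_lintegral_deriv h (uIcc_of_le h ▸ hL).absolutelyContinuousOnInterval
    (hv.monotoneOn_parabolicConj hρ.le h p)]
  have hpρ : ‖p‖ * ρ ≤ m / 4 := by
    rw [mem_closedBall_zero_iff, le_div_iff₀ (by positivity)] at hp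
    linarith
  have hinner : ∀ x ∈ closedBall y ρ, |⟪p, x - y⟫| ≤ ‖p‖ * ρ := fun x hx =>
    (abs_real_inner_le_norm p (x - y)).trans (by gcongr; exact mem_closedBall_iff_norm.1 hx)
  have hleft : parabolicConj v y ρ t₀ t₁ p t₀ ≤ ‖p‖ * ρ := by
    rcases hv.parabolicConj_eq hρ.le p (left_mem_Icc.2 h) with heq | ⟨x, hx, s, hs, heq⟩
    · exact heq.le
    · rw [heq, le_antisymm hs.2 hs.1]
      linarith [hbot x hx, (abs_le.1 (hinner x hx)).1]
  have hright := hv.le_parabolicConj hx₀ (right_mem_Icc.2 h) le_rfl p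
  exact ENNReal.ofReal_le_ofReal (by linarith [(abs_le.1 (hinner x₀ hx₀)).2])

end IsRegularOnCylinder

/-- The points of `B_ρ(y) × (t₀, t₁)` at which `v` is positive and, on the part of the cylinder up
to their time, lies below its tangent plane in the space variables. -/
def contactSet (v : En n × ℝ → ℝ) (y : En n) (ρ t₀ t₁ : ℝ) : Set (En n × ℝ) :=
  {X ∈ box y ρ t₀ t₁ | 0 < v X ∧ ∀ z ∈ closedBall y ρ, ∀ s ∈ Icc t₀ X.2,
    v (z, s) ≤ v X + ⟪spatialGrad v X, z - X.1⟫}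

lemma contactSet_subset (v : En n × ℝ → ℝ) (y : En n) (ρ t₀ t₁ : ℝ) :
    contactSet v y ρ t₀ t₁ ⊆ box y ρ t₀ t₁ := fun _ hX => hX.1

lemma isOpen_box (y : En n) (ρ t₀ t₁ : ℝ) : IsOpen (box y ρ t₀ t₁) :=
  isOpen_ball.prod isOpen_Ioo

lemma box_subset (y : En n) (ρ t₀ t₁ : ℝ) : box y ρ t₀ t₁ ⊆ closedBall y ρ ×ˢ Icc t₀ t₁ :=
  prod_mono ball_subset_closedBall Ioo_subset_Icc_self

section ContactSet

variable {v : En n × ℝ → ℝ} {y : En n} {ρ t₀ t₁ : ℝ} {X : En n × ℝ}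

lemma IsC21.Dt_nonneg_of_mem_contactSet (hv : IsC21 v (box y ρ t₀ t₁))
    (hX : X ∈ contactSet v y ρ t₀ t₁) : 0 ≤ Dt v X := by
  have hslope := (hasDerivWithinAt_iff_tendsto_slope' self_notMem_Iio).1
    (hv.hasDerivAt hX.1).hasDerivWithinAt
  refine ge_of_tendsto hslope ?_
  filter_upwards [Ioo_mem_nhdsLT hX.1.2.1] with s hs
  have hle := hX.2.2 X.1 (ball_subset_closedBall hX.1.1) s ⟨hs.1.le, hs.2.le⟩
  rw [sub_self, inner_zero_right, add_zero] at hle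
  rw [slope_def_field]
  exact div_nonneg_of_nonpos (sub_nonpos.2 hle) (sub_nonpos.2 hs.2.le)

lemma isLocalMax_sub_inner_of_contact {x p : En n} {t : ℝ} (hx : x ∈ ball y ρ) (ht : t₀ ≤ t)
    (h : ∀ z ∈ closedBall y ρ, ∀ s ∈ Icc t₀ t, v (z, s) ≤ v (x, t) + ⟪p, z - x⟫) :
    IsLocalMax (fun z => v (z, t) - ⟪p, z⟫) x := by
  filter_upwards [isOpen_ball.mem_nhds hx] with z hz
  have := h z (ball_subset_closedBall hz) t ⟨ht, le_rfl⟩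
  rw [inner_sub_right] at this
  linarith

lemma IsC21.hasGradientAt_sub_inner (hv : IsC21 v (box y ρ t₀ t₁)) (hX : X ∈ box y ρ t₀ t₁)
    (p : En n) : HasGradientAt (fun z => v (z, X.2) - ⟪p, z⟫) (spatialGrad v X - p) X.1 := by
  rw [hasGradientAt_iff_hasFDerivAt, map_sub]
  exact (hv.hasGradientAt hX).hasFDerivAt.sub (innerSL ℝ p).hasFDerivAt

lemma IsC21.posSemidef_neg_spatialHess_of_mem_contactSet (hv : IsC21 v (box y ρ t₀ t₁))
    (hX : X ∈ contactSet v y ρ t₀ t₁) : (-spatialHess v X).PosSemidef := by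
  set p := spatialGrad v X
  have hmax := isLocalMax_sub_inner_of_contact (v := v) (p := p) hX.1.1 hX.1.2.1.le hX.2.2
  have hgrad : ∀ᶠ z in 𝓝 X.1,
      HasGradientAt (fun z => v (z, X.2) - ⟪p, z⟫) (spatialGrad v (z, X.2) - p) z := by
    filter_upwards [isOpen_ball.mem_nhds hX.1.1] with z hz
    exact hv.hasGradientAt_sub_inner (X := (z, X.2)) ⟨hz, hX.1.2⟩ p
  have hhess := (hv.hasFDerivAt_spatialGrad hX.1).sub_const p
  refine .of_dotProduct_mulVec_nonneg ?_ fun ξ => ?_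
  · rw [Matrix.IsHermitian, Matrix.conjTranspose_eq_transpose_of_trivial]
    exact (hv.isSymm_spatialHess (isOpen_box ..) hX.1).neg
  · have hnonpos := inner_hessian_nonpos_of_isLocalMax hgrad hhess hmax (WithLp.toLp 2 ξ)
    rw [real_inner_comm, Matrix.inner_toEuclideanCLM] at hnonpos
    simpa [Matrix.neg_mulVec] using hnonpos

lemma IsC21.abs_det_spatialHess_of_mem_contactSet (hv : IsC21 v (box y ρ t₀ t₁))
    (hX : X ∈ contactSet v y ρ t₀ t₁) : |(spatialHess v X).det| = (-spatialHess v X).det := by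
  rw [← abs_of_nonneg (hv.posSemidef_neg_spatialHess_of_mem_contactSet hX).det_nonneg,
    Matrix.det_neg, abs_mul, abs_pow, abs_neg, abs_one, one_pow, one_mul]

namespace IsRegularOnCylinder

lemma measurableSet_contactSet (hv : IsRegularOnCylinder v y ρ t₀ t₁) :
    MeasurableSet (contactSet v y ρ t₀ t₁) := by
  have hbox := (isOpen_box y ρ t₀ t₁).measurableSet
  set A : Set (box y ρ t₀ t₁) := {X | 0 < v X}
  set B : Set (box y ρ t₀ t₁) := ⋂ z ∈ closedBall y ρ, ⋂ s ∈ Icc t₀ t₁,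
    {X | v (z, min s X.1.2) ≤ v X + ⟪spatialGrad v X, z - X.1.1⟫}
  have hvbox : Continuous fun X : box y ρ t₀ t₁ => v X := hv.isC21.cont.domRestrict
  have hgrad : Continuous fun X : box y ρ t₀ t₁ => spatialGrad v X :=
    hv.isC21.continuousOn_spatialGrad.domRestrict
  have hB : IsClosed B := by
    refine isClosed_biInter fun z hz => isClosed_biInter fun s hs => isClosed_le ?_
      (hvbox.add (hgrad.inner (by fun_prop)))
    exact hv.continuousOn.comp_continuous (by fun_prop) fun X =>
      ⟨hz, le_min hs.1 X.2.2.1.le, (min_le_left _ _).trans hs.2⟩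
  have heq : contactSet v y ρ t₀ t₁ = Subtype.val '' (A ∩ B) := by
    ext X
    constructor
    · rintro ⟨hX, hpos, h⟩
      exact ⟨⟨X, hX⟩, ⟨hpos, mem_iInter₂.2 fun z hz => mem_iInter₂.2 fun s hs =>
        h z hz _ ⟨le_min hs.1 hX.2.1.le, min_le_right _ _⟩⟩, rfl⟩
    · rintro ⟨⟨X, hX⟩, ⟨hpos, h⟩, rfl⟩
      refine ⟨hX, hpos, fun z hz s hs => ?_⟩
      simpa [hs.2] using
        mem_iInter₂.1 (mem_iInter₂.1 h z hz) s ⟨hs.1, hs.2.trans hX.2.2.le⟩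
  exact heq ▸ hbox.subtype_image
    ((isOpen_lt continuous_const hvbox).measurableSet.inter hB.measurableSet)

lemma exists_mem_contactSet (hv : IsRegularOnCylinder v y ρ t₀ t₁) (hρ : 0 ≤ ρ)
    (hlat : ∀ x ∈ sphere y ρ, ∀ t ∈ Icc t₀ t₁, v (x, t) ≤ 0) {p : En n} {t : ℝ}
    (ht : t ∈ Ioo t₀ t₁) (hd : 0 < deriv (parabolicConj v y ρ t₀ t₁ p) t) :
    ∃ x, (x, t) ∈ contactSet v y ρ t₀ t₁ ∧ spatialGrad v (x, t) = p ∧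
      Dt v (x, t) = deriv (parabolicConj v y ρ t₀ t₁ p) t := by
  set G := parabolicConj v y ρ t₀ t₁ p
  have htI : t ∈ Icc t₀ t₁ := Ioo_subset_Icc_self ht
  have hnhds : ∀ᶠ s in 𝓝 t, s ∈ Icc t₀ t₁ := Icc_mem_nhds ht.1 ht.2
  have hnotmin : ¬IsLocalMin G t := fun hmin => hd.ne' hmin.deriv_eq_zero
  have hne : G t ≠ ‖p‖ * ρ := fun heq => hnotmin <|
    .of_forall fun s => heq ▸ norm_mul_le_parabolicConj v y ρ t₀ t₁ p s
  obtain ⟨x, hx, s, hs, heq⟩ := (hv.parabolicConj_eq hρ p htI).resolve_left hne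
  obtain rfl : s = t := by
    refine hs.2.eq_of_not_lt fun hst => hnotmin ?_
    filter_upwards [Ioi_mem_nhds hst] with t' ht'
    exact heq.trans_le (hv.le_parabolicConj hx ⟨hs.1, hs.2.trans htI.2⟩ (le_of_lt ht') p)
  have hpos : 0 < v (x, s) := by
    have hlt := (norm_mul_le_parabolicConj v y ρ t₀ t₁ p s).lt_of_ne' hne
    have hinner : -⟪p, x - y⟫ ≤ ‖p‖ * ρ := (neg_le_abs _).trans <|
      (abs_real_inner_le_norm p (x - y)).trans (by gcongr; exact mem_closedBall_iff_norm.1 hx)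
    linarith
  have hxball : x ∈ ball y ρ :=
    lt_of_le_of_ne hx fun hsphere => (hlat x hsphere s htI).not_gt hpos
  have hcontact : ∀ z ∈ closedBall y ρ, ∀ s' ∈ Icc t₀ s,
      v (z, s') ≤ v (x, s) + ⟪p, z - x⟫ := fun z hz s' hs' => by
    have hle := hv.le_parabolicConj hz ⟨hs'.1, hs'.2.trans htI.2⟩ hs'.2 p
    have hsplit : ⟪p, z - x⟫ = ⟪p, z - y⟫ - ⟪p, x - y⟫ := by
      rw [← inner_sub_right, sub_sub_sub_cancel_right]
    linarith
  have hgrad : spatialGrad v (x, s) = p := sub_eq_zero.1 <| gradient_eq_zero_of_isLocalMax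
    (hv.isC21.hasGradientAt_sub_inner (X := (x, s)) ⟨hxball, ht⟩ p)
    (isLocalMax_sub_inner_of_contact hxball htI.1 hcontact)
  refine ⟨x, ⟨⟨hxball, ht⟩, hpos, hgrad ▸ hcontact⟩, hgrad, ?_⟩
  have hmin : IsLocalMin (fun t' => G t' - v (x, t')) s := by
    filter_upwards [hnhds] with t' ht'
    linarith [hv.le_parabolicConj hx ht' le_rfl p]
  have hzero := hmin.hasDerivAt_eq_zero ((differentiableAt_of_deriv_ne_zero hd.ne').hasDerivAt.sub
    (hv.isC21.hasDerivAt (X := (x, s)) ⟨hxball, ht⟩))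
  linarith

end IsRegularOnCylinder

end ContactSet

section Slices

variable {α γ : Type*} [MeasurableSpace α] [MeasurableSpace γ] {μ : Measure α} {η : Measure γ}
  [SFinite η] {s : Set (α × γ)} {f : α × γ → ℝ≥0∞}

lemma setLIntegral_prod_eq_lintegral_left (hs : MeasurableSet s)
    (hf : AEMeasurable f ((μ.prod η).restrict s)) :
    ∫⁻ z in s, f z ∂μ.prod η = ∫⁻ x, ∫⁻ y in {y | (x, y) ∈ s}, f (x, y) ∂η ∂μ := by
  rw [← lintegral_indicator hs, lintegral_prod _ ((aemeasurable_indicator_iff hs).2 hf)]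
  exact lintegral_congr fun x =>
    lintegral_indicator (hs.preimage measurable_prodMk_left) fun y => f (x, y)

lemma setLIntegral_prod_eq_lintegral_right [SFinite μ] (hs : MeasurableSet s)
    (hf : AEMeasurable f ((μ.prod η).restrict s)) :
    ∫⁻ z in s, f z ∂μ.prod η = ∫⁻ y, ∫⁻ x in {x | (x, y) ∈ s}, f (x, y) ∂μ ∂η := by
  rw [← lintegral_indicator hs, lintegral_prod_symm _ ((aemeasurable_indicator_iff hs).2 hf)]
  exact lintegral_congr fun y =>
    lintegral_indicator (hs.preimage measurable_prodMk_right) fun x => f (x, y)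

end Slices

lemma det_toEuclideanCLM {ι : Type*} [Fintype ι] [DecidableEq ι] (M : Matrix ι ι ℝ) :
    (Matrix.toEuclideanCLM (𝕜 := ℝ) M).det = M.det := by
  rw [ContinuousLinearMap.det, Matrix.coe_toEuclideanCLM_eq_toEuclideanLin]
  exact (congrArg (fun f => (f M).det) (Matrix.toLpLin_eq_toLin 2 2)).trans
    (LinearMap.det_toLin _ M)

namespace IsRegularOnCylinder

variable {v : En n × ℝ → ℝ} {y : En n} {ρ t₀ t₁ : ℝ} {w : En n → ℝ}

lemma measurable_deriv_parabolicConj (hv : IsRegularOnCylinder v y ρ t₀ t₁) (h : t₀ ≤ t₁) :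
    Measurable fun z : En n × ℝ => deriv (parabolicConj v y ρ t₀ t₁ z.1) z.2 :=
  measurable_deriv_with_param (hv.continuous_parabolicConj h)

lemma deriv_parabolicConj_nonneg (hv : IsRegularOnCylinder v y ρ t₀ t₁) (hρ : 0 ≤ ρ) {t : ℝ}
    (ht : t ∈ Ioo t₀ t₁) (p : En n) : 0 ≤ deriv (parabolicConj v y ρ t₀ t₁ p) t := by
  rw [← derivWithin_of_mem_nhds (Icc_mem_nhds ht.1 ht.2)]
  exact (hv.monotoneOn_parabolicConj hρ (ht.1.trans ht.2).le p).derivWithin_nonneg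

lemma measurable_indicator_contactSet (hv : IsRegularOnCylinder v y ρ t₀ t₁) (hw : Continuous w) :
    Measurable ((contactSet v y ρ t₀ t₁).indicator fun X => w (spatialGrad v X) * Dt v X) := by
  classical
  rw [← piecewise_eq_indicator]
  exact (((hw.comp_continuousOn hv.isC21.continuousOn_spatialGrad).mul hv.isC21.cont_t).mono
    (contactSet_subset v y ρ t₀ t₁)).measurable_piecewise continuousOn_const
    hv.measurableSet_contactSet

lemma lintegral_mul_deriv_parabolicConj_le (hv : IsRegularOnCylinder v y ρ t₀ t₁) (hρ : 0 ≤ ρ)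
    (hlat : ∀ x ∈ sphere y ρ, ∀ t ∈ Icc t₀ t₁, v (x, t) ≤ 0) (hw : Continuous w)
    (hw0 : ∀ p, 0 ≤ w p) {t : ℝ} (ht : t ∈ Ioo t₀ t₁) :
    ∫⁻ p, ENNReal.ofReal (w p * deriv (parabolicConj v y ρ t₀ t₁ p) t) ≤
      ∫⁻ x in {x | (x, t) ∈ contactSet v y ρ t₀ t₁}, ENNReal.ofReal |(spatialHess v (x, t)).det| *
        ENNReal.ofReal (w (spatialGrad v (x, t)) * Dt v (x, t)) := by
  set E := contactSet v y ρ t₀ t₁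
  have hslice : MeasurableSet {x | (x, t) ∈ E} :=
    hv.measurableSet_contactSet.preimage measurable_prodMk_right
  have hderiv : Measurable fun p => deriv (parabolicConj v y ρ t₀ t₁ p) t :=
    (hv.measurable_deriv_parabolicConj (ht.1.trans ht.2).le).of_uncurry_right
  have hderiv0 := hv.deriv_parabolicConj_nonneg hρ ht
  obtain ⟨q, hq, hq0, hqE⟩ : ∃ q : En n → ℝ, Measurable q ∧ (∀ x, 0 ≤ q x) ∧
      ∀ x, (x, t) ∈ E → q x = w (spatialGrad v (x, t)) * Dt v (x, t) :=
    ⟨_, (hv.measurable_indicator_contactSet hw).comp measurable_prodMk_right,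
      fun x => indicator_nonneg (fun X hX =>
        mul_nonneg (hw0 _) (hv.isC21.Dt_nonneg_of_mem_contactSet hX)) _,
      fun x hx => indicator_of_mem hx _⟩
  have hgrad : ∀ x ∈ {x | (x, t) ∈ E}, HasFDerivWithinAt (fun x => spatialGrad v (x, t))
      (Matrix.toEuclideanCLM (𝕜 := ℝ) (spatialHess v (x, t))) {x | (x, t) ∈ E} x := fun x hx =>
    (hv.isC21.hasFDerivAt_spatialGrad (X := (x, t)) hx.1).hasFDerivWithinAt
  calc _ ≤ ∫⁻ x in {x | (x, t) ∈ E}, ENNReal.ofReal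
          |(Matrix.toEuclideanCLM (𝕜 := ℝ) (spatialHess v (x, t))).det| *
            ENNReal.ofReal (q x) := by
        refine lintegral_le_lintegral_abs_det_fderiv_mul volume hslice hgrad
          (F := fun p => w p * deriv (parabolicConj v y ρ t₀ t₁ p) t)
          (hw.measurable.mul hderiv) (fun p => mul_nonneg (hw0 p) (hderiv0 p)) hq hq0
          fun p hp => ?_
        obtain ⟨x, hx, hgradx, hDt⟩ := hv.exists_mem_contactSet hρ hlat ht
          ((hderiv0 p).lt_of_ne' (right_ne_zero_of_mul hp.ne'))
        exact ⟨x, hx, hgradx, by rw [hqE x hx, hgradx, hDt]⟩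
    _ = _ := setLIntegral_congr_fun hslice fun x hx => by
        simp only [det_toEuclideanCLM, hqE x hx]

lemma aemeasurable_abs_det_mul (hv : IsRegularOnCylinder v y ρ t₀ t₁) (hw : Continuous w) :
    AEMeasurable (fun X => ENNReal.ofReal |(spatialHess v X).det| *
      ENNReal.ofReal (w (spatialGrad v X) * Dt v X))
      (volume.restrict (contactSet v y ρ t₀ t₁)) :=
  ((hv.isC21.continuousOn_abs_det_mul hw).mono (contactSet_subset v y ρ t₀ t₁)).aemeasurable
    hv.measurableSet_contactSet

theorem ofReal_half_mul_lintegral_le (hv : IsRegularOnCylinder v y ρ t₀ t₁) (hρ : 0 < ρ)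
    (h : t₀ ≤ t₁) (hlat : ∀ x ∈ sphere y ρ, ∀ t ∈ Icc t₀ t₁, v (x, t) ≤ 0)
    (hbot : ∀ x ∈ closedBall y ρ, v (x, t₀) ≤ 0) {x₀ : En n} (hx₀ : x₀ ∈ closedBall y ρ) {m : ℝ}
    (hm : m ≤ v (x₀, t₁)) (hw : Continuous w) (hw0 : ∀ p, 0 ≤ w p) :
    ENNReal.ofReal (m / 2) * ∫⁻ p in closedBall 0 (m / (4 * ρ)), ENNReal.ofReal (w p) ≤
      ∫⁻ X in contactSet v y ρ t₀ t₁, ENNReal.ofReal |(spatialHess v X).det| *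
        ENNReal.ofReal (w (spatialGrad v X) * Dt v X) := by
  set G := parabolicConj v y ρ t₀ t₁
  calc ENNReal.ofReal (m / 2) * ∫⁻ p in closedBall 0 (m / (4 * ρ)), ENNReal.ofReal (w p)
      = ∫⁻ p in closedBall 0 (m / (4 * ρ)), ENNReal.ofReal (w p) * ENNReal.ofReal (m / 2) := by
        rw [lintegral_mul_const _ hw.measurable.ennreal_ofReal, mul_comm]
    _ ≤ ∫⁻ p in closedBall 0 (m / (4 * ρ)), ∫⁻ t in Ioo t₀ t₁,
          ENNReal.ofReal (w p * deriv (G p) t) := by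
        refine setLIntegral_mono' measurableSet_closedBall fun p hp => ?_
        simp_rw [ENNReal.ofReal_mul (hw0 p)]
        rw [lintegral_const_mul' _ _ ENNReal.ofReal_ne_top]
        gcongr
        exact hv.ofReal_half_le_lintegral_deriv_parabolicConj hρ h hbot hx₀ hm hp
    _ ≤ ∫⁻ p, ∫⁻ t in Ioo t₀ t₁, ENNReal.ofReal (w p * deriv (G p) t) :=
        setLIntegral_le_lintegral _ _
    _ = ∫⁻ t in Ioo t₀ t₁, ∫⁻ p, ENNReal.ofReal (w p * deriv (G p) t) :=
        lintegral_lintegral_swap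
          ((hw.measurable.comp measurable_fst).mul
            (hv.measurable_deriv_parabolicConj h)).ennreal_ofReal.aemeasurable
    _ ≤ ∫⁻ t, ∫⁻ x in {x | (x, t) ∈ contactSet v y ρ t₀ t₁},
          ENNReal.ofReal |(spatialHess v (x, t)).det| *
            ENNReal.ofReal (w (spatialGrad v (x, t)) * Dt v (x, t)) :=
        (setLIntegral_mono' measurableSet_Ioo fun t ht =>
          hv.lintegral_mul_deriv_parabolicConj_le hρ.le hlat hw hw0 ht).trans
          (setLIntegral_le_lintegral _ _)
    _ = _ := (setLIntegral_prod_eq_lintegral_right hv.measurableSet_contactSet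
        (hv.aemeasurable_abs_det_mul hw)).symm

lemma lintegral_Dt_contactSet_le (hv : IsRegularOnCylinder v y ρ t₀ t₁) {V : ℝ}
    (hV : ∀ X ∈ box y ρ t₀ t₁, v X ≤ V) (x : En n) :
    ∫⁻ t in {t | (x, t) ∈ contactSet v y ρ t₀ t₁}, ENNReal.ofReal (Dt v (x, t)) ≤
      ENNReal.ofReal V := by
  have hslice : MeasurableSet {t | (x, t) ∈ contactSet v y ρ t₀ t₁} :=
    hv.measurableSet_contactSet.preimage measurable_prodMk_left
  have hmono : MonotoneOn (fun t => v (x, t)) {t | (x, t) ∈ contactSet v y ρ t₀ t₁} :=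
    fun t ht t' ht' htt' => by
      simpa using ht'.2.2 x (ball_subset_closedBall ht.1.1) t ⟨ht.1.2.1.le, htt'⟩
  rw [lintegral_deriv_eq_volume_image_of_monotoneOn hslice
    (fun t ht => (hv.isC21.hasDerivAt (X := (x, t)) ht.1).hasDerivWithinAt) hmono]
  calc _ ≤ volume (Icc 0 V) := measure_mono <|
        image_subset_iff.2 fun t ht => ⟨ht.2.1.le, hV _ ht.1⟩
    _ = _ := by simp

lemma setLIntegral_contactSet_le (hv : IsRegularOnCylinder v y ρ t₀ t₁) {V : ℝ}
    (hV : ∀ X ∈ box y ρ t₀ t₁, v X ≤ V) {Φ B : En n × ℝ → ℝ≥0∞} {β : En n → ℝ≥0∞} {C₁ C₂ : ℝ≥0∞}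
    (hC₂ : C₂ ≠ ∞) (hΦ : AEMeasurable Φ (volume.restrict (contactSet v y ρ t₀ t₁)))
    (hΦle : ∀ X ∈ contactSet v y ρ t₀ t₁, Φ X ≤ C₁ + C₂ * B X * ENNReal.ofReal (Dt v X))
    (hβ : ∀ x ∈ ball y ρ, ∀ᵐ t ∂volume.restrict (Ioo t₀ t₁), B (x, t) ≤ β x) :
    ∫⁻ X in contactSet v y ρ t₀ t₁, Φ X ≤
      C₁ * volume {X ∈ box y ρ t₀ t₁ | 0 < v X} +
        C₂ * ENNReal.ofReal V * ∫⁻ x in ball y ρ, β x := by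
  set E := contactSet v y ρ t₀ t₁
  have hE : MeasurableSet E := hv.measurableSet_contactSet
  have hslice : ∀ x, ∫⁻ t in {t | (x, t) ∈ E}, Φ (x, t) ≤ C₁ * volume {t | (x, t) ∈ E} +
      (ball y ρ).indicator (fun x => C₂ * ENNReal.ofReal V * β x) x := fun x => by
    by_cases hx : x ∈ ball y ρ
    swap
    · simp [show {t | (x, t) ∈ E} = ∅ from eq_empty_of_forall_notMem fun _ ht => hx ht.1.1]
    have hmeas : MeasurableSet {t | (x, t) ∈ E} := hE.preimage measurable_prodMk_left
    have hBβ : ∀ᵐ t ∂volume.restrict {t | (x, t) ∈ E}, B (x, t) ≤ β x :=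
      ae_mono (Measure.restrict_mono (fun _ ht => ht.1.2) le_rfl) (hβ x hx)
    calc ∫⁻ t in {t | (x, t) ∈ E}, Φ (x, t)
        ≤ ∫⁻ t in {t | (x, t) ∈ E}, (C₁ + C₂ * β x * ENNReal.ofReal (Dt v (x, t))) := by
          refine lintegral_mono_ae ?_
          filter_upwards [hBβ, ae_restrict_mem hmeas] with t hBt ht
          exact (hΦle _ ht).trans (by gcongr)
      _ ≤ C₁ * volume {t | (x, t) ∈ E} + C₂ * β x * ENNReal.ofReal V := by
          rw [lintegral_add_left measurable_const, setLIntegral_const, lintegral_const_mul'']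
          · gcongr
            exact hv.lintegral_Dt_contactSet_le hV x
          · refine (ENNReal.continuous_ofReal.comp_continuousOn ?_).aemeasurable hmeas
            exact hv.isC21.cont_t.comp (by fun_prop) fun t ht => ht.1
      _ = _ := by rw [indicator_of_mem hx, mul_right_comm]
  calc ∫⁻ X in E, Φ X = ∫⁻ x, ∫⁻ t in {t | (x, t) ∈ E}, Φ (x, t) :=
        setLIntegral_prod_eq_lintegral_left hE hΦ
    _ ≤ ∫⁻ x, (C₁ * volume {t | (x, t) ∈ E} +
          (ball y ρ).indicator (fun x => C₂ * ENNReal.ofReal V * β x) x) := lintegral_mono hslice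
    _ = C₁ * volume E + C₂ * ENNReal.ofReal V * ∫⁻ x in ball y ρ, β x := by
        have hvol : Measurable fun x => volume {t | (x, t) ∈ E} := measurable_measure_prodMk_left hE
        rw [lintegral_add_left (hvol.const_mul _), lintegral_const_mul _ hvol,
          lintegral_indicator measurableSet_ball,
          lintegral_const_mul' _ _ (ENNReal.mul_ne_top hC₂ ENNReal.ofReal_ne_top)]
        exact congrArg (C₁ * · + _) (Measure.prod_apply hE).symm
    _ ≤ _ := by gcongr; exact fun X hX => ⟨hX.1, hX.2.1⟩

end IsRegularOnCylinder

lemma mul_pow_mul_inv_pow_mul_le {ν s D N β q k : ℝ} (hν : 0 ≤ ν) (hs : 0 ≤ s) (hD : 0 ≤ D)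
    (hN : 0 ≤ N) (hβ : 0 ≤ β) (hk : 0 < k) (hkq : k ≤ q) (h : D + s ≤ N + β * q) (n : ℕ) :
    (ν * s) ^ n * ((q ^ n)⁻¹ * D) ≤ 2 * N * (2 * ν * N / k) ^ n + (2 * ν * β) ^ n * D := by
  have hq : 0 < q := hk.trans_le hkq
  rw [← mul_assoc, ← div_eq_mul_inv, ← div_pow]
  rcases le_total (β * q) N with hle | hle
  · have hνs : ν * s ≤ 2 * ν * N := by nlinarith
    calc (ν * s / q) ^ n * D ≤ (2 * ν * N / k) ^ n * (2 * N) := by gcongr; linarith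
      _ = 2 * N * (2 * ν * N / k) ^ n := mul_comm _ _
      _ ≤ _ := le_add_of_nonneg_right (by positivity)
  · have hνs : ν * s / q ≤ 2 * ν * β := by
      rw [div_le_iff₀ hq]
      nlinarith
    calc (ν * s / q) ^ n * D ≤ (2 * ν * β) ^ n * D := by gcongr
      _ ≤ _ := le_add_of_nonneg_left (by positivity)

section ContactEstimate

variable {v : En n × ℝ → ℝ} {y : En n} {ρ t₀ t₁ ν N k : ℝ}
  {a : En n × ℝ → Matrix (Fin n) (Fin n) ℝ} {b : En n × ℝ → En n} {X : En n × ℝ}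

lemma IsC21.abs_det_mul_Dt_le_of_mem_contactSet (hv : IsC21 v (box y ρ t₀ t₁)) (hν : 0 < ν)
    (ha : ∀ ξ : Fin n → ℝ, ν⁻¹ * ∑ i, ξ i ^ 2 ≤ ∑ i, ∑ j, a X i j * ξ i * ξ j)
    (hN : 0 ≤ N) (hk : 0 < k) (hpde : -(N + k * ‖b X‖) ≤ -Dt v X + Lop a b v X)
    (hX : X ∈ contactSet v y ρ t₀ t₁) :
    |(spatialHess v X).det| * (((‖spatialGrad v X‖ + k) ^ n)⁻¹ * Dt v X) ≤
      2 * N * (2 * ν * N / k) ^ n + (2 * ν) ^ n * ‖b X‖ ^ n * Dt v X := by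
  set s := ∑ i, ∑ j, a X i j * (-spatialHess v X) i j with hs_def
  have hpsd := hv.posSemidef_neg_spatialHess_of_mem_contactSet hX
  have hs : 0 ≤ s := sum_mul_nonneg_of_posSemidef hpsd fun ξ =>
    (mul_nonneg (inv_nonneg.2 hν.le) (Finset.sum_nonneg fun i _ => sq_nonneg _)).trans (ha ξ)
  have hdet : |(spatialHess v X).det| ≤ (ν * s) ^ n := by
    rw [hv.abs_det_spatialHess_of_mem_contactSet hX]
    exact (det_le_mul_sum_mul_pow hν hpsd ha).trans_eq (by rw [Fintype.card_fin])
  have hD := hv.Dt_nonneg_of_mem_contactSet hX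
  have hLop : Lop a b v X = -s + ⟪b X, spatialGrad v X⟫ := by
    have hsymm : ∀ i j, Dxx v i j X = spatialHess v X i j :=
      fun i j => (hv.isSymm_spatialHess (isOpen_box y ρ t₀ t₁) hX.1).apply i j
    simp [Lop_eq_sum_add_inner, hs_def, hsymm]
  have hsum : Dt v X + s ≤ N + ‖b X‖ * (‖spatialGrad v X‖ + k) := by
    linarith [real_inner_le_norm (b X) (spatialGrad v X)]
  calc _ ≤ (ν * s) ^ n * (((‖spatialGrad v X‖ + k) ^ n)⁻¹ * Dt v X) := by gcongr
    _ ≤ _ := mul_pow_mul_inv_pow_mul_le hν.le hs hD hN (norm_nonneg _) hk (by simp) hsum n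
    _ = _ := by rw [mul_pow _ ‖b X‖]

theorem IsRegularOnCylinder.ofReal_half_mul_lintegral_inv_norm_add_pow_le
    (hv : IsRegularOnCylinder v y ρ t₀ t₁)
    (hρ : 0 < ρ) (h : t₀ ≤ t₁) (hlat : ∀ x ∈ sphere y ρ, ∀ t ∈ Icc t₀ t₁, v (x, t) ≤ 0)
    (hbot : ∀ x ∈ closedBall y ρ, v (x, t₀) ≤ 0) {x₀ : En n} (hx₀ : x₀ ∈ closedBall y ρ) {m : ℝ}
    (hm : m ≤ v (x₀, t₁)) {V : ℝ} (hV : ∀ X ∈ box y ρ t₀ t₁, v X ≤ V) (hν : 0 < ν)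
    (ha : UnifParabolic ν a (box y ρ t₀ t₁)) (hN : 0 ≤ N) (hk : 0 < k)
    (hpde : ∀ X ∈ box y ρ t₀ t₁, -(N + k * ‖b X‖) ≤ -Dt v X + Lop a b v X) {β : En n → ℝ≥0∞}
    (hβ : ∀ x ∈ ball y ρ, ∀ᵐ t ∂volume.restrict (Ioo t₀ t₁), ‖b (x, t)‖ₑ ≤ β x) :
    ENNReal.ofReal (m / 2) *
        ∫⁻ p in closedBall (0 : En n) (m / (4 * ρ)), ENNReal.ofReal ((‖p‖ + k) ^ n)⁻¹ ≤
      ENNReal.ofReal (2 * N * (2 * ν * N / k) ^ n) * volume {X ∈ box y ρ t₀ t₁ | 0 < v X} +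
        ENNReal.ofReal ((2 * ν) ^ n) * ENNReal.ofReal V * ∫⁻ x in ball y ρ, β x ^ n := by
  have hw : Continuous fun p : En n => ((‖p‖ + k) ^ n)⁻¹ :=
    Continuous.inv₀ (by fun_prop) fun p => by positivity
  have hpow : ∀ x ∈ ball y ρ, ∀ᵐ t ∂volume.restrict (Ioo t₀ t₁), ‖b (x, t)‖ₑ ^ n ≤ β x ^ n :=
    fun x hx => (hβ x hx).mono fun t ht => by gcongr
  refine (hv.ofReal_half_mul_lintegral_le hρ h hlat hbot hx₀ hm hw fun p => by positivity).trans
    (hv.setLIntegral_contactSet_le hV (B := fun X => ‖b X‖ₑ ^ n) ENNReal.ofReal_ne_top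
      (hv.aemeasurable_abs_det_mul hw) (fun X hX => ?_) hpow)
  have hD := hv.isC21.Dt_nonneg_of_mem_contactSet hX
  rw [← ENNReal.ofReal_mul (abs_nonneg _), ← ofReal_norm, ← ENNReal.ofReal_pow (norm_nonneg _),
    ← ENNReal.ofReal_mul (by positivity), ← ENNReal.ofReal_mul (by positivity),
    ← ENNReal.ofReal_add (by positivity) (by positivity)]
  exact ENNReal.ofReal_le_ofReal (hv.isC21.abs_det_mul_Dt_le_of_mem_contactSet hν (ha X hX.1).1
    hN hk (hpde X hX.1) hX)

end ContactEstimate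

lemma closure_box (y : En n) {ρ t₀ t₁ : ℝ} (hρ : ρ ≠ 0) (h : t₀ ≠ t₁) :
    closure (box y ρ t₀ t₁) = closedBall y ρ ×ˢ Icc t₀ t₁ := by
  rw [box, closure_prod_eq, closure_ball _ hρ, closure_Ioo h]

lemma IsC21.isRegularOnCylinder {u : En n × ℝ → ℝ} {y : En n} {ρ t₀ t₁ : ℝ}
    (hu : IsC21 u (closedBall y ρ ×ˢ Icc t₀ t₁)) : IsRegularOnCylinder u y ρ t₀ t₁ where
  isC21 := hu.mono (box_subset y ρ t₀ t₁)
  continuousOn := hu.cont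
  lipschitz := by
    obtain ⟨L, hL⟩ := ((isCompact_closedBall y ρ).prod isCompact_Icc).exists_bound_of_continuousOn
      hu.cont_t
    refine ⟨L.toNNReal, fun x hx => (convex_Icc t₀ t₁).lipschitzOnWith_of_nnnorm_hasDerivWithin_le
      (f' := fun t => Dt u (x, t))
      (fun t ht => (hu.hasDerivAt (X := (x, t)) ⟨hx, ht⟩).hasDerivWithinAt) fun t ht => ?_⟩
    exact NNReal.le_toNNReal_of_coe_le (hL (x, t) ⟨hx, ht⟩)

lemma IsRegularOnCylinder.sub {u v : En n × ℝ → ℝ} {y : En n} {ρ t₀ t₁ : ℝ}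
    (hu : IsRegularOnCylinder u y ρ t₀ t₁) (hv : IsRegularOnCylinder v y ρ t₀ t₁) :
    IsRegularOnCylinder (u - v) y ρ t₀ t₁ where
  isC21 := hu.isC21.sub hv.isC21 (isOpen_box y ρ t₀ t₁)
  continuousOn := hu.continuousOn.sub hv.continuousOn
  lipschitz := by
    obtain ⟨L, hL⟩ := hu.lipschitz
    obtain ⟨L', hL'⟩ := hv.lipschitz
    exact ⟨L + L', fun x hx => (hL x hx).sub (hL' x hx)⟩

/-- `u` is a subsolution, `-u_t + Lu ≥ 0`, in `Q`, of class `C^{2,1}` up to the boundary, for a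
uniformly parabolic operator `L` whose drift is dominated, at almost every time, by a function `β`
of the space variable. -/
structure IsSubsolution (ν : ℝ) (a : En n × ℝ → Matrix (Fin n) (Fin n) ℝ) (b : En n × ℝ → En n)
    (β : En n → ℝ≥0∞) (u : En n × ℝ → ℝ) (Q : Set (En n × ℝ)) : Prop where
  isC21 : IsC21 u (closure Q)
  unifParabolic : UnifParabolic ν a Q
  drift_le : ∀ x, ∀ᵐ t ∂volume.restrict {t | (x, t) ∈ Q}, ‖b (x, t)‖ₑ ≤ β x
  nonneg : ∀ X ∈ Q, 0 ≤ -Dt u X + Lop a b u X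

namespace IsSubsolution

variable {ν : ℝ} {a : En n × ℝ → Matrix (Fin n) (Fin n) ℝ} {b : En n × ℝ → En n}
  {β : En n → ℝ≥0∞} {u : En n × ℝ → ℝ}

lemma mono {Q Q' : Set (En n × ℝ)} (hu : IsSubsolution ν a b β u Q) (hQ : Q' ⊆ Q) :
    IsSubsolution ν a b β u Q' where
  isC21 := hu.isC21.mono (closure_mono hQ)
  unifParabolic X hX := hu.unifParabolic X (hQ hX)
  drift_le x := ae_restrict_of_ae_restrict_of_subset (fun _ ht => hQ ht) (hu.drift_le x)
  nonneg X hX := hu.nonneg X (hQ hX)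

variable {y : En n} {ρ t₀ t₁ A c e N k : ℝ}

lemma le_neg_Dt_add_Lop_sub_barrier (hu : IsSubsolution ν a b β u (box y ρ t₀ t₁)) (hν : 0 ≤ ν)
    (hA : 0 ≤ A) (hN : c + 2 * A * (n * ν) ≤ N) (hk : 2 * A * ρ ≤ k) (T : ℝ) {X : En n × ℝ}
    (hX : X ∈ box y ρ t₀ t₁) :
    -(N + k * ‖b X‖) ≤
      -Dt (u - barrier A c e y T) X + Lop a b (u - barrier A c e y T) X := by
  have huC := hu.isC21.mono subset_closure
  have htrace : (a X).trace ≤ n * ν := by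
    simpa using trace_le_card_mul_of_sum_sq_le hν (hu.unifParabolic X hX).2
  have hdrift : ⟪b X, X.1 - y⟫ ≤ ‖b X‖ * ρ :=
    (real_inner_le_norm _ _).trans (by gcongr; exact (mem_ball_iff_norm.1 hX.1).le)
  rw [huC.Dt_sub (isC21_barrier _) hX, huC.Lop_sub (isC21_barrier _) (isOpen_box y ρ t₀ t₁) hX,
    Dt_barrier, Lop_barrier]
  nlinarith [hu.nonneg X hX, mul_le_mul_of_nonneg_left htrace hA,
    mul_le_mul_of_nonneg_left hdrift hA, mul_le_mul_of_nonneg_right hk (norm_nonneg (b X))]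

theorem ofReal_half_mul_lintegral_inv_norm_add_pow_le
    (hu : IsSubsolution ν a b β u (box y ρ t₀ t₁)) (hν : 0 < ν) (hρ : 0 < ρ) (h : t₀ < t₁)
    (hA : 0 ≤ A) (hc : 0 ≤ c) (he : 0 ≤ e) (hN : c + 2 * A * (n * ν) ≤ N)
    (hk : 2 * A * ρ ≤ k) (hk0 : 0 < k)
    (hlat : ∀ x ∈ sphere y ρ, ∀ t ∈ Icc t₀ t₁, u (x, t) ≤ barrier A c e y t₁ (x, t))
    (hbot : ∀ x ∈ closedBall y ρ, u (x, t₀) ≤ barrier A c e y t₁ (x, t₀))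
    {x₀ : En n} (hx₀ : x₀ ∈ closedBall y ρ) {m : ℝ}
    (hm : m + barrier A c e y t₁ (x₀, t₁) ≤ u (x₀, t₁)) {V : ℝ}
    (hV : ∀ X ∈ box y ρ t₀ t₁, u X ≤ V) :
    ENNReal.ofReal (m / 2) *
        ∫⁻ p in closedBall (0 : En n) (m / (4 * ρ)), ENNReal.ofReal ((‖p‖ + k) ^ n)⁻¹ ≤
      ENNReal.ofReal (2 * N * (2 * ν * N / k) ^ n) * volume {X ∈ box y ρ t₀ t₁ | 0 < u X} +
        ENNReal.ofReal ((2 * ν) ^ n) * ENNReal.ofReal V * ∫⁻ x in ball y ρ, β x ^ n := by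
  have hφ : ∀ X ∈ box y ρ t₀ t₁, 0 ≤ barrier A c e y t₁ X := fun X hX =>
    add_nonneg (add_nonneg (by positivity) (mul_nonneg hc (sub_nonneg.2 hX.2.2.le))) he
  have hN0 : 0 ≤ N := (by positivity : 0 ≤ c + 2 * A * (n * ν)).trans hN
  have hreg : IsRegularOnCylinder (u - barrier A c e y t₁) y ρ t₀ t₁ :=
    (closure_box y hρ.ne' h.ne ▸ hu.isC21).isRegularOnCylinder.sub
      (isC21_barrier _).isRegularOnCylinder
  have hdrift : ∀ x ∈ ball y ρ, ∀ᵐ t ∂volume.restrict (Ioo t₀ t₁), ‖b (x, t)‖ₑ ≤ β x :=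
    fun x hx => ae_restrict_of_ae_restrict_of_subset (fun t ht => mem_prod.2 ⟨hx, ht⟩)
      (hu.drift_le x)
  refine (hreg.ofReal_half_mul_lintegral_inv_norm_add_pow_le hρ h.le
    (fun x hx t ht => sub_nonpos.2 (hlat x hx t ht)) (fun x hx => sub_nonpos.2 (hbot x hx)) hx₀
    (le_sub_iff_add_le.2 hm) (fun X hX => (sub_le_self _ (hφ X hX)).trans (hV X hX)) hν
    hu.unifParabolic hN0 hk0
    (fun X hX => hu.le_neg_Dt_add_Lop_sub_barrier hν.le hA hN hk t₁ hX) hdrift).trans ?_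
  gcongr with X hX
  exact sub_le_self _ (hφ X hX)

end IsSubsolution

lemma mul_le_add_of_ofReal_mul_le {p i c₁ c₂ V τ σ : ℝ} {I T J : ℝ≥0∞} (hp : 0 ≤ p)
    (hc₁ : 0 ≤ c₁) (hc₂ : 0 ≤ c₂) (hV : 0 ≤ V) (hτ : 0 ≤ τ) (hσ : 0 ≤ σ)
    (h : ENNReal.ofReal p * I ≤ ENNReal.ofReal c₁ * T + ENNReal.ofReal c₂ * ENNReal.ofReal V * J)
    (hI : ENNReal.ofReal i ≤ I) (hT : T ≤ ENNReal.ofReal τ) (hJ : J ≤ ENNReal.ofReal σ) :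
    p * i ≤ c₁ * τ + c₂ * V * σ := by
  rw [← ENNReal.ofReal_le_ofReal_iff (by positivity), ENNReal.ofReal_mul hp,
    ENNReal.ofReal_add (by positivity) (by positivity), ENNReal.ofReal_mul hc₁,
    ENNReal.ofReal_mul (by positivity), ENNReal.ofReal_mul hc₂]
  calc ENNReal.ofReal p * ENNReal.ofReal i ≤ ENNReal.ofReal p * I := by gcongr
    _ ≤ ENNReal.ofReal c₁ * T + ENNReal.ofReal c₂ * ENNReal.ofReal V * J := h
    _ ≤ _ := by gcongr

namespace IsSubsolution

variable {ν : ℝ} {a : En n × ℝ → Matrix (Fin n) (Fin n) ℝ} {b : En n × ℝ → En n}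
  {β : En n → ℝ≥0∞} {u : En n × ℝ → ℝ} {y : En n} {ρ t₀ t₁ r M θ τ σ : ℝ}

theorem le_mul_of_measure_pos_le {z : En n} {δ T : ℝ}
    (hu : IsSubsolution ν a b β u (box z δ (T - δ ^ 2) T)) (hν : 0 < ν) (hδ : 0 < δ) (hM : 0 < M)
    (hθ : 0 < θ) (huM : ∀ X ∈ closure (box z δ (T - δ ^ 2) T), u X ≤ M) (hτ0 : 0 ≤ τ)
    (hτ : volume {X ∈ box z δ (T - δ ^ 2) T | 0 < u X} ≤ ENNReal.ofReal τ) (hσ0 : 0 ≤ σ)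
    (hσ : ∫⁻ x in ball z δ, β x ^ n ≤ ENNReal.ofReal σ)
    (hsmall : 2 * (1 + 2 * (n * ν)) / δ ^ 2 * (ν * (1 + 2 * (n * ν)) / δ) ^ n * τ +
      (2 * ν) ^ n * σ < θ / 2 * (volume.real (ball (0 : En n) 1) * (θ / (θ + 8)) ^ n)) :
    u (z, T) ≤ θ * M := by
  by_contra! hlt
  have hδ2 : 0 < δ ^ 2 := by positivity
  rw [closure_box z hδ.ne' (by linarith)] at huM
  have hA : 0 ≤ M / δ ^ 2 := by positivity
  have hAδ : M / δ ^ 2 * δ ^ 2 = M := by field_simp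
  have hlat : ∀ x ∈ sphere z δ, ∀ t ∈ Icc (T - δ ^ 2) T,
      u (x, t) ≤ barrier (M / δ ^ 2) (M / δ ^ 2) 0 z T (x, t) := fun x hx t ht => by
    have : 0 ≤ M / δ ^ 2 * (T - t) := mul_nonneg hA (sub_nonneg.2 ht.2)
    have := huM (x, t) ⟨sphere_subset_closedBall hx, ht⟩
    simp only [barrier, mem_sphere_iff_norm.1 hx]
    linarith
  have hbot : ∀ x ∈ closedBall z δ,
      u (x, T - δ ^ 2) ≤ barrier (M / δ ^ 2) (M / δ ^ 2) 0 z T (x, T - δ ^ 2) := fun x hx => by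
    have : 0 ≤ M / δ ^ 2 * ‖x - z‖ ^ 2 := by positivity
    have := huM (x, T - δ ^ 2) ⟨hx, left_mem_Icc.2 (by linarith)⟩
    simp only [barrier]
    linarith
  have hN : M / δ ^ 2 + 2 * (M / δ ^ 2) * (n * ν) ≤ M / δ ^ 2 * (1 + 2 * (n * ν)) :=
    le_of_eq (by ring)
  have hk : 2 * (M / δ ^ 2) * δ ≤ 2 * M / δ := le_of_eq (by field_simp)
  have htop : θ * M + barrier (M / δ ^ 2) (M / δ ^ 2) 0 z T (z, T) ≤ u (z, T) := by
    simpa [barrier] using hlt.le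
  have h := hu.ofReal_half_mul_lintegral_inv_norm_add_pow_le hν hδ (by linarith) hA hA le_rfl
    hN hk (by positivity) hlat hbot
    (mem_closedBall_self hδ.le) htop fun X hX => huM X (box_subset _ _ _ _ hX)
  have hlower := ofReal_mul_pow_le_lintegral_inv_norm_add_pow (volume : Measure (En n))
    (R := θ * M / (4 * δ)) (k := 2 * M / δ) (by positivity) (by positivity)
  rw [finrank_euclideanSpace_fin] at hlower
  have hreal := mul_le_add_of_ofReal_mul_le (by positivity) (by positivity) (by positivity) hM.le
      hτ0 hσ0 h hlower hτ hσ
  have hratio : θ * M / (4 * δ) / (θ * M / (4 * δ) + 2 * M / δ) = θ / (θ + 8) := by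
    field_simp; ring
  have hfrac : 2 * ν * (M / δ ^ 2 * (1 + 2 * (n * ν))) / (2 * M / δ) =
      ν * (1 + 2 * (n * ν)) / δ := by field_simp
  rw [hratio, hfrac] at hreal
  have := mul_lt_mul_of_pos_left hsmall hM
  refine this.not_ge (le_of_eq_of_le ?_ (hreal.trans_eq ?_)) <;> ring

theorem le_two_mul_of_lateral_le (hn : n ≠ 0) (hu : IsSubsolution ν a b β u (box y ρ t₀ t₁))
    (hν : 0 < ν) (hr : 0 < r) (hρ : 0 < ρ) (hρr : ρ ≤ r) (ht : r ^ 2 / 4 ≤ t₁ - t₀) (hM : 0 < M)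
    (hθ : 0 < θ) (huM : ∀ X ∈ closure (box y ρ t₀ t₁), u X ≤ M)
    (hlat : ∀ x ∈ sphere y ρ, ∀ t ∈ Icc t₀ t₁, u (x, t) ≤ θ * M) (hτ0 : 0 ≤ τ)
    (hτ : volume {X ∈ box y ρ t₀ t₁ | 0 < u X} ≤ ENNReal.ofReal τ) (hσ0 : 0 ≤ σ)
    (hσ : ∫⁻ x in ball y ρ, β x ^ n ≤ ENNReal.ofReal σ) {Λ : ℝ} (hΛ : 0 ≤ Λ)
    (hsmall : 8 / r ^ 2 * (32 * ν * Real.exp Λ / (θ * r)) ^ n * τ + (2 * ν) ^ n * σ <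
      θ / 2 * (n * (volume.real (ball (0 : En n) 1) * ((2 ^ n)⁻¹ * Λ))))
    {x₀ : En n} (hx₀ : x₀ ∈ closedBall y ρ) : u (x₀, t₁) ≤ 2 * θ * M := by
  by_contra! hlt
  have : NeZero n := ⟨hn⟩
  have hr2 : 0 < r ^ 2 := by positivity
  have htt : 0 < t₁ - t₀ := by linarith
  rw [closure_box y hρ.ne' (by linarith)] at huM
  have hc : 0 ≤ M / (t₁ - t₀) := by positivity
  have hcN : M / (t₁ - t₀) + 2 * 0 * (n * ν) ≤ 4 * M / r ^ 2 := by
    rw [mul_zero, zero_mul, add_zero, div_le_div_iff₀ htt hr2]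
    nlinarith
  have hR : 0 < θ * M / (4 * r) := by positivity
  have hk : 0 < θ * M / (4 * r) / Real.exp Λ := by positivity
  have hlat' : ∀ x ∈ sphere y ρ, ∀ t ∈ Icc t₀ t₁,
      u (x, t) ≤ barrier 0 (M / (t₁ - t₀)) (θ * M) y t₁ (x, t) := fun x hx t ht =>
    (hlat x hx t ht).trans (by simpa [barrier] using mul_nonneg hc (sub_nonneg.2 ht.2))
  have hbot : ∀ x ∈ closedBall y ρ,
      u (x, t₀) ≤ barrier 0 (M / (t₁ - t₀)) (θ * M) y t₁ (x, t₀) := fun x hx => by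
    have := huM (x, t₀) ⟨hx, left_mem_Icc.2 (by linarith)⟩
    have : 0 < θ * M := by positivity
    simp only [barrier, div_mul_cancel₀ M htt.ne']
    linarith
  have htop : θ * M + barrier 0 (M / (t₁ - t₀)) (θ * M) y t₁ (x₀, t₁) ≤ u (x₀, t₁) := by
    simp only [barrier, sub_self, mul_zero, zero_mul, zero_add]
    linarith
  have h := hu.ofReal_half_mul_lintegral_inv_norm_add_pow_le hν hρ (by linarith) le_rfl hc
    (by positivity) hcN
    (by rw [mul_zero, zero_mul]; exact hk.le) hk hlat' hbot hx₀ htop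
    fun X hX => huM X (box_subset _ _ _ _ hX)
  have hlog := (ofReal_log_le_lintegral_inv_norm_add_pow (volume : Measure (En n)) hk
    (div_le_self hR.le (Real.one_le_exp hΛ))).trans
    (lintegral_mono_set (closedBall_subset_closedBall (by gcongr : _ ≤ θ * M / (4 * ρ))))
  rw [finrank_euclideanSpace_fin, div_div_cancel₀ hR.ne', Real.log_exp] at hlog
  have hreal := mul_le_add_of_ofReal_mul_le (by positivity) (by positivity) (by positivity) hM.le
    hτ0 hσ0 h hlog hτ hσ
  have hfrac : 2 * ν * (4 * M / r ^ 2) / (θ * M / (4 * r) / Real.exp Λ) =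
      32 * ν * Real.exp Λ / (θ * r) := by field_simp; ring
  rw [hfrac] at hreal
  have := mul_lt_mul_of_pos_left hsmall hM
  refine this.not_ge (le_of_eq_of_le ?_ (hreal.trans_eq ?_)) <;> ring

end IsSubsolution

lemma exists_mem_Ioo_mul_add_lt {C₁ D₁ E₁ C₂ D₂ E₂ : ℝ} (h₁ : D₁ < E₁) (h₂ : D₂ < E₂) :
    ∃ μ ∈ Ioo (0 : ℝ) 1, C₁ * μ + D₁ < E₁ ∧ C₂ * μ + D₂ < E₂ := by
  have hlim (C D : ℝ) : Tendsto (fun μ => C * μ + D) (𝓝[>] 0) (𝓝 D) := by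
    have : Continuous fun μ => C * μ + D := by fun_prop
    simpa using (this.tendsto 0).mono_left nhdsWithin_le_nhds
  have hIoo : ∀ᶠ μ in 𝓝[>] (0 : ℝ), μ ∈ Ioo 0 1 := Ioo_mem_nhdsGT one_pos
  obtain ⟨μ, hμ, hlt₁, hlt₂⟩ := (hIoo.and (((hlim C₁ D₁).eventually_lt_const h₁).and
    ((hlim C₂ D₂).eventually_lt_const h₂))).exists
  exact ⟨μ, hμ, hlt₁, hlt₂⟩

lemma exists_growth_constants (hn : n ≠ 0) {θ ω : ℝ} (hθ : 0 < θ) (hω : 0 < ω) (ν S : ℝ) :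
    ∃ μ ∈ Ioo (0 : ℝ) 1, ∃ K : ℕ, K ≠ 0 ∧ ∃ Λ : ℝ, 0 ≤ Λ ∧
      2 * (1 + 2 * (n * ν)) * (ν * (1 + 2 * (n * ν))) ^ n * (4 * K) ^ (n + 2) * ω * μ +
          (2 * ν) ^ n * (S / K) < θ / 2 * (ω * (θ / (θ + 8)) ^ n) ∧
      8 * (32 * ν * Real.exp Λ / θ) ^ n * ω * μ + (2 * ν) ^ n * S <
          θ / 2 * (n * (ω * ((2 ^ n)⁻¹ * Λ))) := by
  have hK : Tendsto (fun K : ℕ => (2 * ν) ^ n * (S / K)) atTop (𝓝 0) := by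
    simpa using (tendsto_const_div_atTop_nhds_zero_nat S).const_mul ((2 * ν) ^ n)
  have hΛ : Tendsto (fun Λ : ℝ => θ / 2 * (n * (ω * ((2 ^ n)⁻¹ * Λ)))) atTop atTop := by
    have : 0 < (n : ℝ) := by positivity
    refine Tendsto.const_mul_atTop (by positivity) (Tendsto.const_mul_atTop this
      (Tendsto.const_mul_atTop hω (Tendsto.const_mul_atTop (by positivity) tendsto_id)))
  obtain ⟨K, hKlt, hK0⟩ := ((hK.eventually_lt_const
    (by positivity : 0 < θ / 2 * (ω * (θ / (θ + 8)) ^ n))).and (eventually_ne_atTop 0)).exists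
  obtain ⟨Λ, hΛlt, hΛ0⟩ :=
    ((hΛ.eventually_gt_atTop ((2 * ν) ^ n * S)).and (eventually_ge_atTop 0)).exists
  obtain ⟨μ, hμ, hlt₁, hlt₂⟩ := exists_mem_Ioo_mul_add_lt hKlt hΛlt
  exact ⟨μ, hμ, K, hK0, Λ, hΛ0, hlt₁, hlt₂⟩

lemma volume_pcyl (Y : En n × ℝ) {r : ℝ} (hr : 0 < r) :
    volume (pcyl Y r) = ENNReal.ofReal (volume.real (ball (0 : En n) 1) * r ^ n * r ^ 2) := by
  rw [pcyl, box, Measure.volume_eq_prod, Measure.prod_prod, Measure.addHaar_ball_of_pos _ _ hr,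
    Real.volume_Ioo, _root_.sub_sub_cancel, finrank_euclideanSpace_fin, mul_assoc, mul_right_comm,
    ENNReal.ofReal_mul (by positivity), ENNReal.ofReal_mul (by positivity),
    ofReal_measureReal, mul_comm (volume _)]
  ring

lemma closure_pcyl (Y : En n × ℝ) {r : ℝ} (hr : 0 < r) :
    closure (pcyl Y r) = closedBall Y.1 r ×ˢ Icc (Y.2 - r ^ 2) Y.2 :=
  closure_box _ hr.ne' (sub_lt_self _ (by positivity)).ne

lemma isCompact_closure_pcyl (Y : En n × ℝ) {r : ℝ} (hr : 0 < r) :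
    IsCompact (closure (pcyl Y r)) :=
  closure_pcyl Y hr ▸ (isCompact_closedBall _ _).prod isCompact_Icc

lemma pcyl_subset_pcyl (Y : En n × ℝ) {ρ r : ℝ} (hρ : 0 ≤ ρ) (h : ρ ≤ r) : pcyl Y ρ ⊆ pcyl Y r :=
  prod_mono (ball_subset_ball h) (Ioo_subset_Ioo_left (by gcongr))

lemma le_supPos {u : En n × ℝ → ℝ} {A : Set (En n × ℝ)} (hA : IsCompact A)
    (hu : ContinuousOn u A) {X : En n × ℝ} (hX : X ∈ A) : u X ≤ supPos u A :=
  (le_max_left _ _).trans (le_csSup (hA.image_of_continuousOn (hu.sup continuousOn_const)).bddAbove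
    (mem_image_of_mem _ hX))

lemma supPos_nonneg (u : En n × ℝ → ℝ) (A : Set (En n × ℝ)) : 0 ≤ supPos u A :=
  Real.sSup_nonneg (forall_mem_image.2 fun _ _ => le_max_right _ _)

lemma supPos_le {u : En n × ℝ → ℝ} {A : Set (En n × ℝ)} {m : ℝ} (hm : 0 ≤ m)
    (h : ∀ X ∈ A, u X ≤ m) : supPos u A ≤ m :=
  Real.sSup_le (forall_mem_image.2 fun X hX => max_le (h X hX) hm) hm

namespace IsSubsolution

variable {ν : ℝ} {a : En n × ℝ → Matrix (Fin n) (Fin n) ℝ} {b : En n × ℝ → En n}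
  {β : En n → ℝ≥0∞} {u : En n × ℝ → ℝ} {Y : En n × ℝ} {r M θ μ S : ℝ}

theorem of_pcyl (hu : IsC21 u (closure (pcyl Y r))) (ha : UnifParabolic ν a (pcyl Y r))
    (hLu : ∀ X ∈ pcyl Y r, 0 ≤ -Dt u X + Lop a b u X) :
    IsSubsolution ν a b (fun x => essSup (fun t => (‖b (x, t)‖₊ : ℝ≥0∞))
      (volume.restrict {t | (x, t) ∈ pcyl Y r})) u (pcyl Y r) :=
  ⟨hu, ha, fun _ => ENNReal.ae_le_essSup _, hLu⟩

theorem exists_radius_forall_lateral_le (hu : IsSubsolution ν a b β u (pcyl Y r)) (hν : 0 < ν)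
    (hr : 0 < r) (hM : 0 < M) (hθ : 0 < θ) (huM : ∀ X ∈ closure (pcyl Y r), u X ≤ M)
    (hμ : 0 ≤ μ) (hvol : volume {X ∈ pcyl Y r | 0 < u X} ≤ ENNReal.ofReal μ * volume (pcyl Y r))
    (hS0 : 0 ≤ S) (hS : ∫⁻ x, β x ^ n ≤ ENNReal.ofReal S) {K : ℕ} (hK : K ≠ 0)
    (hsmall : 2 * (1 + 2 * (n * ν)) * (ν * (1 + 2 * (n * ν))) ^ n * (4 * K) ^ (n + 2) *
        volume.real (ball (0 : En n) 1) * μ + (2 * ν) ^ n * (S / K) <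
      θ / 2 * (volume.real (ball (0 : En n) 1) * (θ / (θ + 8)) ^ n)) :
    ∃ R ∈ Icc (r / 2) r, ∀ x ∈ sphere Y.1 R, ∀ t ∈ Icc (Y.2 - r ^ 2 / 2) Y.2,
      u (x, t) ≤ θ * M := by
  have hK1 : (1 : ℝ) ≤ K := by exact_mod_cast Nat.one_le_iff_ne_zero.2 hK
  set δ := r / (4 * K) with hδ
  have hδ0 : 0 < δ := by positivity
  have hKδ : 2 * K * δ = r / 2 := by rw [hδ]; field_simp; ring
  have hδr : δ ≤ r / 4 := by rw [hδ]; gcongr; linarith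
  have hδ2 : δ ^ 2 ≤ r ^ 2 / 2 := by nlinarith
  obtain ⟨R, hR, hRint⟩ := exists_radius_forall_setLIntegral_ball_le volume (fun x => β x ^ n) Y.1
    (r / 2) hδ0.le hK
  rw [hKδ] at hR
  refine ⟨R, ⟨by linarith [hR.1], by linarith [hR.2]⟩, fun z hz t ht => ?_⟩
  have hsub : box z δ (t - δ ^ 2) t ⊆ pcyl Y r :=
    prod_mono (ball_subset_ball' (by rw [mem_sphere.1 hz]; linarith [hR.2]))
      (Ioo_subset_Ioo (by linarith [ht.1]) ht.2)
  rw [volume_pcyl Y hr, ← ENNReal.ofReal_mul hμ] at hvol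
  refine (hu.mono hsub).le_mul_of_measure_pos_le hν hδ0 hM hθ
    (fun X hX => huM X (closure_mono hsub hX)) (by positivity)
    ((measure_mono (inter_subset_inter_left {X | 0 < u X} hsub)).trans hvol)
    (by positivity : 0 ≤ S / K) ((hRint z hz).trans ?_) (lt_of_eq_of_lt ?_ hsmall)
  · rw [ENNReal.ofReal_div_of_pos (by positivity), ENNReal.ofReal_natCast]
    gcongr
  · rw [hδ, div_pow _ (r / (4 * K)) n, div_pow r, div_pow r, pow_add]
    field_simp

theorem le_two_mul_of_mem_closure_pcyl_half (hn : n ≠ 0) (hu : IsSubsolution ν a b β u (pcyl Y r))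
    (hν : 0 < ν) (hr : 0 < r) (hM : 0 < M) (hθ : 0 < θ)
    (huM : ∀ X ∈ closure (pcyl Y r), u X ≤ M)
    (hμ : 0 ≤ μ) (hvol : volume {X ∈ pcyl Y r | 0 < u X} ≤ ENNReal.ofReal μ * volume (pcyl Y r))
    (hS0 : 0 ≤ S) (hS : ∫⁻ x, β x ^ n ≤ ENNReal.ofReal S) {R : ℝ} (hR : R ∈ Icc (r / 2) r)
    (hlat : ∀ x ∈ sphere Y.1 R, ∀ t ∈ Icc (Y.2 - r ^ 2 / 2) Y.2, u (x, t) ≤ θ * M) {Λ : ℝ}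
    (hΛ : 0 ≤ Λ) (hsmall : 8 * (32 * ν * Real.exp Λ / θ) ^ n * volume.real (ball (0 : En n) 1) * μ +
        (2 * ν) ^ n * S < θ / 2 * (n * (volume.real (ball (0 : En n) 1) * ((2 ^ n)⁻¹ * Λ))))
    {X : En n × ℝ} (hX : X ∈ closure (pcyl Y (r / 2))) : u X ≤ 2 * θ * M := by
  rw [closure_pcyl Y (by positivity), div_pow] at hX
  obtain ⟨hx, ht⟩ := hX
  have hr2 : 0 < r ^ 2 := by positivity
  have hsub : box Y.1 R (Y.2 - r ^ 2 / 2) X.2 ⊆ pcyl Y r :=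
    prod_mono (ball_subset_ball hR.2) (Ioo_subset_Ioo (by linarith) ht.2)
  rw [volume_pcyl Y hr, ← ENNReal.ofReal_mul hμ] at hvol
  refine (hu.mono hsub).le_two_mul_of_lateral_le hn hν hr (by linarith [hR.1]) hR.2
    (by linarith [ht.1]) hM hθ (fun X hX => huM X (closure_mono hsub hX))
    (fun x hx t ht' => hlat x hx t ⟨ht'.1, ht'.2.trans ht.2⟩) (by positivity)
    ((measure_mono (inter_subset_inter_left {X | 0 < u X} hsub)).trans hvol) hS0
    ((setLIntegral_le_lintegral _ _).trans hS) hΛ (lt_of_eq_of_lt ?_ hsmall)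
    (closedBall_subset_closedBall hR.1 hx)
  rw [← div_div, div_pow _ r n]
  field_simp

end IsSubsolution

/-- **First Growth Theorem** (Theorem 3.5). -/
theorem first_growth_theorem
    (n : ℕ) (hn : 0 < n) (ν S : ℝ) (hν : 1 ≤ ν)
    (β₁ : ℝ) (hβ₁ : β₁ ∈ Set.Ioo (0 : ℝ) 1) :
    ∃ μ : ℝ, μ ∈ Set.Ioo (0 : ℝ) 1 ∧
      ∀ (Y : En n × ℝ) (r : ℝ) (u : En n × ℝ → ℝ)
        (a : En n × ℝ → Matrix (Fin n) (Fin n) ℝ) (b : En n × ℝ → En n),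
        0 < r →
        IsC21 u (closure (pcyl Y r)) →
        UnifParabolic ν a (pcyl Y r) →
        LxnLtinfPow b (pcyl Y r) ≤ ENNReal.ofReal S →
        (∀ X ∈ pcyl Y r, 0 ≤ -Dt u X + Lop a b u X) →
        volume {X ∈ pcyl Y r | 0 < u X} ≤ ENNReal.ofReal μ * volume (pcyl Y r) →
        supPos u (closure (pcyl Y (r / 2))) ≤ β₁ * supPos u (closure (pcyl Y r)) := by
  have hν0 : 0 < ν := by linarith
  have hω : 0 < volume.real (ball (0 : En n) 1) :=
    ENNReal.toReal_pos (measure_ball_pos _ _ one_pos).ne' measure_ball_lt_top.ne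
  obtain ⟨μ, hμ, K, hK, Λ, hΛ, hlatConst, hintConst⟩ :=
    exists_growth_constants hn.ne' (half_pos hβ₁.1) hω ν (max S 0)
  refine ⟨μ, hμ, fun Y r u a b hr hC21 ha hb hLu hvol => ?_⟩
  have hu := IsSubsolution.of_pcyl (b := b) hC21 ha hLu
  have hb' : LxnLtinfPow b (pcyl Y r) ≤ ENNReal.ofReal (max S 0) :=
    hb.trans (ENNReal.ofReal_le_ofReal (le_max_left _ _))
  have huM : ∀ X ∈ closure (pcyl Y r), u X ≤ supPos u (closure (pcyl Y r)) := fun X hX =>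
    le_supPos (isCompact_closure_pcyl Y hr) hC21.cont hX
  refine supPos_le (mul_nonneg hβ₁.1.le (supPos_nonneg _ _)) fun X hX => ?_
  rcases (supPos_nonneg u (closure (pcyl Y r))).eq_or_lt with hM | hM
  · have := huM X (closure_mono (pcyl_subset_pcyl Y (half_pos hr).le (half_le_self hr.le)) hX)
    rwa [← hM, mul_zero, hM]
  · obtain ⟨R, hR, hlat⟩ := hu.exists_radius_forall_lateral_le hν0 hr hM (half_pos hβ₁.1) huM
      hμ.1.le hvol (le_max_right _ _) hb' hK hlatConst
    have h := hu.le_two_mul_of_mem_closure_pcyl_half hn.ne' hν0 hr hM (half_pos hβ₁.1) huM hμ.1.le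
      hvol (le_max_right _ _) hb' hR hlat hΛ hintConst hX
    rwa [mul_div_cancel₀ _ two_ne_zero] at h
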